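/- arXiv:2007.10789 — 3 statements merged into one kernel-verified Lean document; each statement's English description precedes it below -/
import Mathlib

section
/- Let d > 0. There exists a constant C ≥ 1 such that for every v₀ ∈ W^{1,1}_1(ℝ,ℂ) and every t ≥ 0: (∫_ℝ |k e^{−d k² t} v₀(k)|² dk)^{1/2} ≤ C ‖v₀‖_{W^{1,1}_1} (1+t)^{−3/4}. -/
open MeasureTheory Real

noncomputable section

/-- `v'` is the weak derivative of `v : ℝ → ℂ`. -/
def HasWeakDeriv (v v' : ℝ → ℂ) : Prop :=
  LocallyIntegrable v volume ∧ LocallyIntegrable v' volume ∧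
    ∀ φ : ℝ → ℝ, ContDiff ℝ (⊤ : ℕ∞) φ → HasCompactSupport φ →
      ∫ k, Complex.ofReal (deriv φ k) * v k = -∫ k, Complex.ofReal (φ k) * v' k

/-!
Since `W^{1,1}(ℝ)` embeds into `L^∞(ℝ)`, as one sees by mollifying, and since `k ↦ k v(k)` lies in
`W^{1,1}(ℝ)` as soon as `v` lies in `W^{1,1}_1(ℝ)`, both `v` and `k v` are bounded by the norm
`M` of `v`. For small `t` interpolation gives `‖k v‖₂² ≤ ‖k v‖_∞ ‖k v‖₁ ≤ M²`; for large `t`,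
`‖k e^{-dk²t} v‖₂² ≤ ‖v‖_∞² ∫ k² e^{-2dtk²} dk`, and the Gaussian moment is a multiple of
`t^{-3/2}`.
-/

open Filter Topology ContinuousLinearMap
open scoped Convolution ContDiff

lemma integral_norm_convolution_le {𝕜 G E E' F : Type*} [RCLike 𝕜]
    [NormedAddCommGroup E] [NormedSpace 𝕜 E] [NormedAddCommGroup E'] [NormedSpace 𝕜 E']
    [NormedAddCommGroup F] [NormedSpace ℝ F] [NormedSpace 𝕜 F] [AddGroup G]
    [MeasurableSpace G] [MeasurableAdd₂ G] [MeasurableNeg G] {μ : Measure G} [SFinite μ]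
    [μ.IsAddRightInvariant] (L : E →L[𝕜] E' →L[𝕜] F) {f : G → E} {g : G → E'} (hf : Integrable f μ)
    (hg : Integrable g μ) :
    ∫ x, ‖(f ⋆[L, μ] g) x‖ ∂μ ≤ ‖L‖ * ((∫ x, ‖f x‖ ∂μ) * ∫ x, ‖g x‖ ∂μ) := by
  have hconv : ∫ x, ((‖f ·‖) ⋆[mul ℝ ℝ, μ] (‖g ·‖)) x ∂μ = (∫ x, ‖f x‖ ∂μ) * ∫ x, ‖g x‖ ∂μ :=
    integral_convolution (mul ℝ ℝ) hf.norm hg.norm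
  rw [← hconv, ← integral_const_mul]
  refine integral_mono_of_nonneg (Eventually.of_forall fun x => norm_nonneg _)
    ((hf.norm.integrable_convolution _ hg.norm).const_mul _) ?_
  filter_upwards [hf.norm.ae_convolution_exists (mul ℝ ℝ) hg.norm] with x hx
  calc ‖∫ t, L (f t) (g (x - t)) ∂μ‖ ≤ ∫ t, ‖L‖ * (‖f t‖ * ‖g (x - t)‖) ∂μ :=
        norm_integral_le_of_norm_le (hx.integrable.const_mul _)
          (Eventually.of_forall fun t => by simpa only [mul_assoc] using L.le_opNorm₂ _ _)
    _ = ‖L‖ * ((‖f ·‖) ⋆[mul ℝ ℝ, μ] (‖g ·‖)) x := integral_const_mul _ _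

section

variable {E : Type*} [NormedAddCommGroup E] [NormedSpace ℝ E] [CompleteSpace E]

lemma exists_seq_contDiffBump_ae_tendsto_convolution {G : Type*} [NormedAddCommGroup G]
    [NormedSpace ℝ G] [FiniteDimensional ℝ G] [MeasurableSpace G] [BorelSpace G] {μ : Measure G}
    [μ.IsAddHaarMeasure] {g : G → E} (hg : LocallyIntegrable g μ) :
    ∃ φ : ℕ → ContDiffBump (0 : G), ∀ᵐ x ∂μ,
      Tendsto (fun n => ((φ n).normed μ ⋆[lsmul ℝ ℝ, μ] g) x) atTop (𝓝 (g x)) := by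
  let φ : ℕ → ContDiffBump (0 : G) := fun n =>
    { rIn := 1 / ((n : ℝ) + 1)
      rOut := 2 * (1 / ((n : ℝ) + 1))
      rIn_pos := by positivity
      rIn_lt_rOut := lt_two_mul_self (by positivity) }
  have hrOut : Tendsto (fun n => (φ n).rOut) atTop (𝓝 0) := by
    simpa only [mul_zero] using (tendsto_one_div_add_atTop_nhds_zero_nat (𝕜 := ℝ)).const_mul 2
  exact ⟨φ, ContDiffBump.ae_convolution_tendsto_right_of_locallyIntegrable (K := 2) hrOut
    (Eventually.of_forall fun _ => le_rfl) hg⟩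

lemma norm_le_integral_norm_of_hasDerivAt {f f' : ℝ → E}
    (hderiv : ∀ x, HasDerivAt f (f' x) x) (hf : Integrable f) (hf' : Integrable f') (x : ℝ) :
    ‖f x‖ ≤ ∫ y, ‖f' y‖ := by
  have hlim : Tendsto f atBot (𝓝 0) :=
    tendsto_zero_of_hasDerivAt_of_integrableOn_Iic (a := x) (fun y _ => hderiv y)
      hf'.integrableOn hf.integrableOn
  calc ‖f x‖ = ‖∫ y in Set.Iic x, f' y‖ := by
        rw [integral_Iic_of_hasDerivAt_of_tendsto' (fun y _ => hderiv y) hf'.integrableOn hlim,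
          sub_zero]
    _ ≤ ∫ y in Set.Iic x, ‖f' y‖ := norm_integral_le_integral_norm _
    _ ≤ ∫ y, ‖f' y‖ :=
        setIntegral_le_integral hf'.norm (Eventually.of_forall fun _ => norm_nonneg _)

end

namespace HasWeakDeriv

variable {v v' : ℝ → ℂ}

lemma integral_deriv_smul (h : HasWeakDeriv v v') {φ : ℝ → ℝ} (hφ : ContDiff ℝ ∞ φ)
    (hφc : HasCompactSupport φ) : ∫ k, deriv φ k • v k = -∫ k, φ k • v' k := by
  simpa only [Complex.real_smul] using h.2.2 φ hφ hφc

lemma hasDerivAt_convolution (h : HasWeakDeriv v v') {ρ : ℝ → ℝ} (hρ : ContDiff ℝ ∞ ρ)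
    (hρc : HasCompactSupport ρ) (x : ℝ) :
    HasDerivAt (ρ ⋆[lsmul ℝ ℝ, volume] v) ((ρ ⋆[lsmul ℝ ℝ, volume] v') x) x := by
  have hweak := h.integral_deriv_smul (hρ.comp (contDiff_const.sub contDiff_id))
    (hρc.comp_homeomorph (Homeomorph.subLeft x))
  simp only [Function.comp_def, id_eq, deriv_comp_const_sub, neg_smul, integral_neg,
    neg_inj] at hweak
  have hconv : (deriv ρ ⋆[lsmul ℝ ℝ, volume] v) x = (ρ ⋆[lsmul ℝ ℝ, volume] v') x := by
    rwa [convolution_lsmul_swap, convolution_lsmul_swap]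
  rw [← hconv]
  exact hρc.hasDerivAt_convolution_left (lsmul ℝ ℝ) (hρ.of_le (by simp)) h.1 x

lemma ae_norm_le_integral_norm (h : HasWeakDeriv v v') (hv : Integrable v)
    (hv' : Integrable v') : ∀ᵐ x, ‖v x‖ ≤ ∫ y, ‖v' y‖ := by
  obtain ⟨φ, hφ⟩ := exists_seq_contDiffBump_ae_tendsto_convolution (μ := volume) h.1
  filter_upwards [hφ] with x hx
  refine le_of_tendsto hx.norm (Eventually.of_forall fun n => ?_)
  set ρ : ℝ → ℝ := (φ n).normed volume
  have hρ : Integrable ρ := (φ n).integrable_normed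
  have hρ_norm : ∫ y, ‖ρ y‖ = 1 := by
    simpa only [ρ, Real.norm_of_nonneg ((φ n).nonneg_normed _)] using
      (φ n).integral_normed (μ := volume)
  calc ‖(ρ ⋆[lsmul ℝ ℝ, volume] v) x‖
      ≤ ∫ y, ‖(ρ ⋆[lsmul ℝ ℝ, volume] v') y‖ :=
        norm_le_integral_norm_of_hasDerivAt
          (h.hasDerivAt_convolution (φ n).contDiff_normed (φ n).hasCompactSupport_normed)
          (hρ.integrable_convolution _ hv) (hρ.integrable_convolution _ hv') x
    _ ≤ ‖(lsmul ℝ ℝ : ℝ →L[ℝ] ℂ →L[ℝ] ℂ)‖ * ((∫ y, ‖ρ y‖) * ∫ y, ‖v' y‖) :=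
        integral_norm_convolution_le _ hρ hv'
    _ ≤ ∫ y, ‖v' y‖ := by
        rw [hρ_norm, one_mul]
        exact mul_le_of_le_one_left (integral_nonneg fun _ => norm_nonneg _) opNorm_lsmul_le

lemma smul (h : HasWeakDeriv v v') {g : ℝ → ℝ} (hg : ContDiff ℝ ∞ g) :
    HasWeakDeriv (fun k => g k • v k) (fun k => deriv g k • v k + g k • v' k) := by
  have hg' : Continuous (deriv g) := hg.continuous_deriv (by simp)
  have hmul {w : ℝ → ℂ} {c : ℝ → ℝ} (hw : LocallyIntegrable w) (hc : Continuous c) :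
      LocallyIntegrable fun k => c k • w k :=
    locallyIntegrableOn_univ.1 ((locallyIntegrableOn_univ.2 hw).continuousOn_smul
      isOpen_univ.isLocallyClosed hc.continuousOn)
  refine ⟨hmul h.1 hg.continuous, (hmul h.1 hg').add (hmul h.2.1 hg.continuous),
    fun φ hφ hφc => ?_⟩
  have hφ' : Continuous (deriv φ) := hφ.continuous_deriv (by simp)
  have hint {w : ℝ → ℂ} {c ψ : ℝ → ℝ} (hw : LocallyIntegrable w) (hc : Continuous c)
      (hψ : Continuous ψ) (hψc : HasCompactSupport ψ) : Integrable fun k => ψ k • c k • w k :=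
    (hmul hw hc).integrable_smul_left_of_hasCompactSupport hψ hψc
  have hderiv (k : ℝ) : deriv (fun k => φ k * g k) k = deriv φ k * g k + φ k * deriv g k :=
    deriv_fun_mul (hφ.differentiable (by simp) k) (hg.differentiable (by simp) k)
  have hweak := h.integral_deriv_smul (hφ.mul hg) hφc.mul_right
  simp only [hderiv, add_smul, mul_smul] at hweak
  rw [integral_add (hint h.1 hg.continuous hφ' hφc.deriv) (hint h.1 hg' hφ.continuous hφc)] at hweak
  simp only [← Complex.real_smul, smul_add]
  rw [integral_add (hint h.1 hg' hφ.continuous hφc) (hint h.2.1 hg.continuous hφ.continuous hφc),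
    eq_sub_of_add_eq hweak]
  abel

end HasWeakDeriv

section

variable {α E : Type*} [MeasurableSpace α] {μ : Measure α} [NormedAddCommGroup E]

lemma integral_norm_sq_le_of_ae_norm_le {E' : Type*} [NormedAddCommGroup E'] {f : α → E}
    {g : α → E'} {A : ℝ} (hg : Integrable g μ)
    (hfg : ∀ᵐ x ∂μ, ‖f x‖ ≤ ‖g x‖) (hgA : ∀ᵐ x ∂μ, ‖g x‖ ≤ A) :
    ∫ x, ‖f x‖ ^ 2 ∂μ ≤ A * ∫ x, ‖g x‖ ∂μ := by
  rw [← integral_const_mul]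
  refine integral_mono_of_nonneg (Eventually.of_forall fun _ => by positivity)
    (hg.norm.const_mul A) ?_
  filter_upwards [hfg, hgA] with x hfgx hgx
  calc ‖f x‖ ^ 2 ≤ ‖g x‖ * ‖g x‖ := by rw [sq]; gcongr
    _ ≤ A * ‖g x‖ := by gcongr

variable [NormedSpace ℝ E] {f : α → E}

lemma integral_norm_smul_sq_le_of_ae_norm_le {m : α → ℝ} {A : ℝ}
    (hm : Integrable (fun x => m x ^ 2) μ) (hf : ∀ᵐ x ∂μ, ‖f x‖ ≤ A) :
    ∫ x, ‖m x • f x‖ ^ 2 ∂μ ≤ A ^ 2 * ∫ x, m x ^ 2 ∂μ := by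
  rw [← integral_const_mul]
  refine integral_mono_of_nonneg (Eventually.of_forall fun _ => by positivity)
    (hm.const_mul _) ?_
  filter_upwards [hf] with x hx
  rw [norm_smul, mul_pow, Real.norm_eq_abs, sq_abs, mul_comm]
  gcongr

variable {c w : α → ℝ}

lemma integrable_smul_of_abs_le_weight (hc : AEStronglyMeasurable c μ)
    (hcw : ∀ x, |c x| ≤ w x) (hf : AEStronglyMeasurable f μ)
    (hwf : Integrable (fun x => w x * ‖f x‖) μ) : Integrable (fun x => c x • f x) μ :=
  hwf.mono' (hc.smul hf) (Eventually.of_forall fun x => by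
    rw [norm_smul, Real.norm_eq_abs]
    exact mul_le_mul_of_nonneg_right (hcw x) (norm_nonneg _))

lemma integral_norm_smul_le_of_abs_le_weight (hcw : ∀ x, |c x| ≤ w x)
    (hwf : Integrable (fun x => w x * ‖f x‖) μ) :
    ∫ x, ‖c x • f x‖ ∂μ ≤ ∫ x, w x * ‖f x‖ ∂μ :=
  integral_mono_of_nonneg (Eventually.of_forall fun _ => norm_nonneg _) hwf
    (Eventually.of_forall fun x => by
      simp only [norm_smul, Real.norm_eq_abs]
      exact mul_le_mul_of_nonneg_right (hcw x) (norm_nonneg _))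

end

/-- `v` belongs to `W^{1,1}_1(ℝ, ℂ)` and has weak derivative `v'`. The derivative is a separate
argument, as in `HasWeakDeriv`. -/
structure MemWeightedSobolev (v v' : ℝ → ℂ) : Prop where
  hasWeakDeriv : HasWeakDeriv v v'
  integrable_weight : Integrable fun k => (1 + |k|) * ‖v k‖
  integrable_weight_deriv : Integrable fun k => (1 + |k|) * ‖v' k‖

/-- The norm of `W^{1,1}_1(ℝ, ℂ)` of a function `v` with weak derivative `v'`. -/
def weightedSobolevNorm (v v' : ℝ → ℂ) : ℝ :=
  (∫ k, (1 + |k|) * ‖v k‖) + ∫ k, (1 + |k|) * ‖v' k‖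

lemma integral_weight_le_weightedSobolevNorm (v v' : ℝ → ℂ) :
    ∫ k, (1 + |k|) * ‖v k‖ ≤ weightedSobolevNorm v v' :=
  le_add_of_nonneg_right (integral_nonneg fun _ => by positivity)

lemma integral_weight_deriv_le_weightedSobolevNorm (v v' : ℝ → ℂ) :
    ∫ k, (1 + |k|) * ‖v' k‖ ≤ weightedSobolevNorm v v' :=
  le_add_of_nonneg_left (integral_nonneg fun _ => by positivity)

lemma weightedSobolevNorm_nonneg (v v' : ℝ → ℂ) : 0 ≤ weightedSobolevNorm v v' :=
  (integral_nonneg fun _ => by positivity).trans (integral_weight_le_weightedSobolevNorm v v')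

lemma abs_one_le_one_add_abs (k : ℝ) : |(1 : ℝ)| ≤ 1 + |k| := by
  rw [abs_one]
  exact le_add_of_nonneg_right (abs_nonneg k)

lemma abs_le_one_add_abs (k : ℝ) : |k| ≤ 1 + |k| :=
  le_add_of_nonneg_left zero_le_one

/-- The `L²` norm of `k ↦ k e^{-bk²} f(k)`, which is, up to a constant, that of the derivative of
the heat flow at time `b` when `f` is the Fourier transform of the initial datum. -/
def heatDerivL2Norm {E : Type*} [NormedAddCommGroup E] [NormedSpace ℝ E] (b : ℝ) (f : ℝ → E) : ℝ :=
  √(∫ k, ‖(k * exp (-(b * k ^ 2))) • f k‖ ^ 2)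

lemma sqrt_integral_eq_heatDerivL2Norm (d t : ℝ) (v : ℝ → ℂ) :
    √(∫ k : ℝ, ‖Complex.ofReal k * Complex.ofReal (exp (-(d * k ^ 2 * t))) * v k‖ ^ 2) =
      heatDerivL2Norm (d * t) v := by
  simp only [heatDerivL2Norm, Complex.real_smul, Complex.ofReal_mul, mul_right_comm d]

namespace MemWeightedSobolev

variable {v v' : ℝ → ℂ} (h : MemWeightedSobolev v v')

include h

lemma integrable_smul {c : ℝ → ℝ} (hc : Continuous c) (hcw : ∀ k, |c k| ≤ 1 + |k|) :
    Integrable fun k => c k • v k :=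
  integrable_smul_of_abs_le_weight hc.aestronglyMeasurable hcw
    h.hasWeakDeriv.1.aestronglyMeasurable h.integrable_weight

lemma integrable_smul_deriv {c : ℝ → ℝ} (hc : Continuous c) (hcw : ∀ k, |c k| ≤ 1 + |k|) :
    Integrable fun k => c k • v' k :=
  integrable_smul_of_abs_le_weight hc.aestronglyMeasurable hcw
    h.hasWeakDeriv.2.1.aestronglyMeasurable h.integrable_weight_deriv

lemma integrable : Integrable v := by
  simpa only [one_smul] using h.integrable_smul continuous_const abs_one_le_one_add_abs

lemma integrable_deriv : Integrable v' := by
  simpa only [one_smul] using h.integrable_smul_deriv continuous_const abs_one_le_one_add_abs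

lemma ae_norm_le : ∀ᵐ k, ‖v k‖ ≤ weightedSobolevNorm v v' := by
  have hle : ∫ k, ‖v' k‖ ≤ weightedSobolevNorm v v' := by
    simpa only [one_smul] using
      (integral_norm_smul_le_of_abs_le_weight abs_one_le_one_add_abs
        h.integrable_weight_deriv).trans (integral_weight_deriv_le_weightedSobolevNorm v v')
  filter_upwards [h.hasWeakDeriv.ae_norm_le_integral_norm h.integrable h.integrable_deriv]
    with k hk using hk.trans hle

lemma ae_norm_id_smul_le : ∀ᵐ k, ‖k • v k‖ ≤ weightedSobolevNorm v v' := by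
  have hkv : HasWeakDeriv (fun k => k • v k) (fun k => v k + k • v' k) := by
    simpa only [deriv_id'', one_smul] using h.hasWeakDeriv.smul contDiff_fun_id
  have hkv_int := h.integrable_smul continuous_id abs_le_one_add_abs
  have hkv'_int := h.integrable_smul_deriv continuous_id abs_le_one_add_abs
  have hle : ∫ k, ‖v k + k • v' k‖ ≤ weightedSobolevNorm v v' := by
    calc ∫ k, ‖v k + k • v' k‖
        ≤ ∫ k, (‖v k‖ + ‖k • v' k‖) :=
          integral_mono (h.integrable.add hkv'_int).norm (h.integrable.norm.add hkv'_int.norm)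
            fun _ => norm_add_le _ _
      _ = (∫ k, ‖v k‖) + ∫ k, ‖k • v' k‖ := integral_add h.integrable.norm hkv'_int.norm
      _ ≤ weightedSobolevNorm v v' := by
          refine add_le_add ?_ (integral_norm_smul_le_of_abs_le_weight abs_le_one_add_abs
            h.integrable_weight_deriv)
          simpa only [one_smul] using
            integral_norm_smul_le_of_abs_le_weight abs_one_le_one_add_abs h.integrable_weight
  filter_upwards [hkv.ae_norm_le_integral_norm hkv_int (h.integrable.add hkv'_int)]
    with k hk using hk.trans hle

lemma heatDerivL2Norm_le {b : ℝ} (hb : 0 ≤ b) :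
    heatDerivL2Norm b v ≤ weightedSobolevNorm v v' := by
  refine (sqrt_le_left (weightedSobolevNorm_nonneg v v')).2 ?_
  have hdamp (k : ℝ) : ‖(k * exp (-(b * k ^ 2))) • v k‖ ≤ ‖k • v k‖ := by
    rw [mul_comm, mul_smul, norm_smul, Real.norm_of_nonneg (exp_pos _).le]
    exact mul_le_of_le_one_left (norm_nonneg _)
      (exp_le_one_iff.2 (neg_nonpos.2 (by positivity)))
  calc ∫ k, ‖(k * exp (-(b * k ^ 2))) • v k‖ ^ 2
      ≤ weightedSobolevNorm v v' * ∫ k, ‖k • v k‖ :=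
        integral_norm_sq_le_of_ae_norm_le (h.integrable_smul continuous_id abs_le_one_add_abs)
          (Eventually.of_forall hdamp) h.ae_norm_id_smul_le
    _ ≤ weightedSobolevNorm v v' ^ 2 := by
        rw [sq]
        refine mul_le_mul_of_nonneg_left ?_ (weightedSobolevNorm_nonneg v v')
        exact (integral_norm_smul_le_of_abs_le_weight abs_le_one_add_abs
          h.integrable_weight).trans (integral_weight_le_weightedSobolevNorm v v')

end MemWeightedSobolev

lemma integral_abs_rpow_mul_exp_neg_mul_sq {q b : ℝ} (hq : -1 < q) (hb : 0 < b) :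
    ∫ x : ℝ, |x| ^ q * exp (-b * x ^ 2) = b ^ (-(q + 1) / 2) * Gamma ((q + 1) / 2) := by
  calc ∫ x : ℝ, |x| ^ q * exp (-b * x ^ 2)
      = ∫ x : ℝ, |x| ^ q * exp (-b * |x| ^ (2 : ℝ)) := by simp only [rpow_two, sq_abs]
    _ = 2 * ∫ x in Set.Ioi (0 : ℝ), x ^ q * exp (-b * x ^ (2 : ℝ)) :=
        integral_comp_abs (f := fun x => x ^ q * exp (-b * x ^ (2 : ℝ)))
    _ = b ^ (-(q + 1) / 2) * Gamma ((q + 1) / 2) := by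
        rw [integral_rpow_mul_exp_neg_mul_rpow two_pos hq hb]
        ring

lemma heatDerivL2Norm_le_of_ae_norm_le {E : Type*} [NormedAddCommGroup E] [NormedSpace ℝ E]
    {f : ℝ → E} {A b : ℝ} (hb : 0 < b) (hf : ∀ᵐ k, ‖f k‖ ≤ A) :
    heatDerivL2Norm b f ≤ √(Gamma (3 / 2)) * (2 * b) ^ (-(3 / 4) : ℝ) * A := by
  obtain ⟨k₀, hk₀⟩ := hf.exists
  have hA : 0 ≤ A := (norm_nonneg _).trans hk₀
  have hsq : (fun k : ℝ => (k * exp (-(b * k ^ 2))) ^ 2) =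
      fun k => |k| ^ (2 : ℝ) * exp (-(2 * b) * k ^ 2) := by
    ext k
    rw [mul_pow, ← exp_nat_mul, rpow_two, sq_abs]
    push_cast
    ring_nf
  have hmoment : ∫ k : ℝ, (k * exp (-(b * k ^ 2))) ^ 2 =
      Gamma (3 / 2) * (2 * b) ^ (-(3 : ℝ) / 2) := by
    rw [hsq, integral_abs_rpow_mul_exp_neg_mul_sq (by norm_num) (by positivity), mul_comm]
    norm_num
  have hint : Integrable fun k : ℝ => (k * exp (-(b * k ^ 2))) ^ 2 := by
    refine .of_integral_ne_zero ?_
    rw [hmoment]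
    exact (mul_pos (Gamma_pos_of_pos (by norm_num)) (by positivity)).ne'
  refine (sqrt_le_left (by positivity)).2
    ((integral_norm_smul_sq_le_of_ae_norm_le hint hf).trans_eq ?_)
  rw [hmoment, mul_pow, mul_pow, sq_sqrt (Gamma_nonneg_of_nonneg (by norm_num)),
    ← rpow_mul_natCast (by positivity), mul_comm]
  norm_num

lemma le_two_rpow_mul_one_add_rpow_neg {x K p t : ℝ} (hp : 0 ≤ p) (ht : 0 ≤ t) (hK : 0 ≤ K)
    (hsmall : t ≤ 1 → x ≤ K) (hlarge : 1 ≤ t → x ≤ K * t ^ (-p)) :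
    x ≤ 2 ^ p * K * (1 + t) ^ (-p) := by
  have hx : x ≤ K * max 1 t ^ (-p) := by
    rcases le_total t 1 with h | h
    · simpa only [max_eq_left h, one_rpow, mul_one] using hsmall h
    · simpa only [max_eq_right h] using hlarge h
  have hmax : (1 + t) / 2 ≤ max 1 t := by
    linarith [le_max_left 1 t, le_max_right 1 t]
  calc x ≤ K * max 1 t ^ (-p) := hx
    _ ≤ K * ((1 + t) / 2) ^ (-p) := by
        gcongr K * ?_
        exact rpow_le_rpow_of_nonpos (by positivity) hmax (neg_nonpos.2 hp)
    _ = 2 ^ p * K * (1 + t) ^ (-p) := by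
        rw [div_rpow (by positivity) zero_le_two, rpow_neg zero_le_two, div_inv_eq_mul]
        ring

/-- heat-semigroup weighted `L²`-estimate in Fourier space:
`(∫ |k e^{-dk²t} v₀(k)|² dk)^{1/2} ≤ C ‖v₀‖_{W^{1,1}_1} (1+t)^{-3/4}`. -/
theorem heat_semigroup_weighted_L2_estimate (d : ℝ) (hd : 0 < d) :
    ∃ C : ℝ, 1 ≤ C ∧
      ∀ v₀ v₀' : ℝ → ℂ, HasWeakDeriv v₀ v₀' →
        Integrable (fun k => (1 + |k|) * ‖v₀ k‖) →
        Integrable (fun k => (1 + |k|) * ‖v₀' k‖) →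
        ∀ t : ℝ, 0 ≤ t →
          Real.sqrt (∫ k : ℝ,
              ‖Complex.ofReal k * Complex.ofReal (Real.exp (-(d * k ^ 2 * t))) * v₀ k‖ ^ 2) ≤
            C * ((∫ k : ℝ, (1 + |k|) * ‖v₀ k‖) + ∫ k : ℝ, (1 + |k|) * ‖v₀' k‖) *
              (1 + t) ^ (-(3 : ℝ) / 4) := by
  set c : ℝ := √(Gamma (3 / 2)) * (2 * d) ^ (-(3 / 4) : ℝ)
  refine ⟨2 ^ (3 / 4 : ℝ) * max 1 c, one_le_mul_of_one_le_of_one_le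
    (one_le_rpow one_le_two (by norm_num)) (le_max_left 1 c), fun v v' hweak hv hv' t ht => ?_⟩
  have h : MemWeightedSobolev v v' := ⟨hweak, hv, hv'⟩
  have hM : 0 ≤ weightedSobolevNorm v v' := weightedSobolevNorm_nonneg v v'
  have hsmall : heatDerivL2Norm (d * t) v ≤ max 1 c * weightedSobolevNorm v v' :=
    (h.heatDerivL2Norm_le (by positivity)).trans (le_mul_of_one_le_left hM (le_max_left 1 c))
  have hlarge (ht1 : 1 ≤ t) :
      heatDerivL2Norm (d * t) v ≤ max 1 c * weightedSobolevNorm v v' * t ^ (-(3 / 4) : ℝ) := by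
    calc heatDerivL2Norm (d * t) v
        ≤ c * t ^ (-(3 / 4) : ℝ) * weightedSobolevNorm v v' := by
          simpa only [c, ← mul_assoc, mul_rpow (mul_nonneg zero_le_two hd.le) ht] using
            heatDerivL2Norm_le_of_ae_norm_le (by positivity : 0 < d * t) h.ae_norm_le
      _ ≤ max 1 c * weightedSobolevNorm v v' * t ^ (-(3 / 4) : ℝ) := by
          rw [mul_right_comm]
          gcongr
          exact le_max_right 1 c
  rw [sqrt_integral_eq_heatDerivL2Norm, neg_div, mul_assoc (2 ^ _)]
  exact le_two_rpow_mul_one_add_rpow_neg (by norm_num) ht (by positivity) (fun _ => hsmall) hlarge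
end
end

section
/- Let d > 0, c ∈ ℝ and q ∈ ℕ with q ≥ 4. There exists a constant C ≥ 1, depending only on d, c and q, such that the following holds for every t ≥ 0 and δ ∈ (0,1]: if z is measurable on ℝ × [0,t], z(·,s) ∈ L¹(ℝ,ℂ) ∩ L^∞(ℝ,ℂ) for each s ∈ [0,t], and ‖z(·,s)‖_{L¹} ≤ δ (1+s)^{−1/2} and ‖z(·,s)‖_{L^∞} ≤ δ for all s ∈ [0,t], then for j ∈ {0,1}: ∫_ℝ |k|^j | ∫_0^t e^{−k² d (t−s) + i c k s} z^{*q}(k,s) ds | dk ≤ C δ² (1+t)^{−(1+j)/2}. -/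
open MeasureTheory Real

noncomputable section

/-- convolution on `ℝ`. -/
def conv (f g : ℝ → ℂ) : ℝ → ℂ := fun k => ∫ ξ : ℝ, f (k - ξ) * g ξ

/-- `convIter f m` is the `(m+1)`-fold convolution power of `f`;
in particular `convIter f (q-1) = f^{*q}` for `q ≥ 1`. -/
def convIter (f : ℝ → ℂ) : ℕ → ℝ → ℂ
  | 0 => f
  | m + 1 => conv (convIter f m) f

/-- `e^{x + iy}` for real `x, y`. -/
def expc (x y : ℝ) : ℂ := Complex.exp (Complex.ofReal x + Complex.ofReal y * Complex.I)

/-! Both the phase and the cancellations in `z^{*q}` can be ignored. Young's inequality gives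
`‖z^{*q}‖_∞ ≤ δ^q (1+s)^{-(q-1)/2}` and `‖z^{*q}‖_1 ≤ δ^q (1+s)^{-q/2}`, and scaling shows that
`|k|^α e^{-dk²(t-s)}` has `L¹` norm `O((t-s)^{-(1+α)/2})` and `L^∞` norm `O((t-s)^{-α/2})`.

Either `t - s` or `1 + s` is at least `(1+t)/2`. In the first case the `L¹` norm of the heat weight
yields the whole decay rate, and `(1+s)^{-(q-1)/2}` is integrable in time since `q ≥ 4`. In the
second case the `L^∞` norm is used: its singularity at `s = t` is integrable for `α < 2`, and
`(1+s)^{-q/2}` supplies more decay than is needed. -/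

open Set Function

open scoped ENNReal

section Convolution

variable {f g : ℝ → ℂ}

theorem enorm_conv_le (f g : ℝ → ℂ) (k : ℝ) :
    ‖conv f g k‖ₑ ≤ ∫⁻ ξ, ‖f (k - ξ)‖ₑ * ‖g ξ‖ₑ :=
  (enorm_integral_le_lintegral_enorm _).trans_eq (by simp only [enorm_mul])

theorem eLpNorm_one_conv_le (hf : Measurable f) (hg : Measurable g) :
    eLpNorm (conv f g) 1 ≤ eLpNorm f 1 * eLpNorm g 1 := by
  simp only [eLpNorm_one_eq_lintegral_enorm]
  calc ∫⁻ k, ‖conv f g k‖ₑ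
      ≤ ∫⁻ k, ∫⁻ ξ, ‖f (k - ξ)‖ₑ * ‖g ξ‖ₑ := lintegral_mono (enorm_conv_le f g)
    _ = ∫⁻ ξ, ∫⁻ k, ‖f (k - ξ)‖ₑ * ‖g ξ‖ₑ :=
        lintegral_lintegral_swap (by unfold uncurry; fun_prop)
    _ = ∫⁻ ξ, (∫⁻ k, ‖f k‖ₑ) * ‖g ξ‖ₑ := by
        refine lintegral_congr fun ξ => ?_
        rw [lintegral_mul_const _ (by fun_prop),
          lintegral_sub_right_eq_self (fun k => ‖f k‖ₑ) ξ]
    _ = (∫⁻ k, ‖f k‖ₑ) * ∫⁻ ξ, ‖g ξ‖ₑ := lintegral_const_mul _ (by fun_prop)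

theorem eLpNorm_top_conv_le (f : ℝ → ℂ) (hg : Measurable g) :
    eLpNorm (conv f g) ∞ ≤ eLpNorm f ∞ * eLpNorm g 1 := by
  simp only [eLpNorm_exponent_top, eLpNorm_one_eq_lintegral_enorm]
  refine eLpNormEssSup_le_of_ae_enorm_bound (.of_forall fun k => ?_)
  have hfk : ∀ᵐ ξ, ‖f (k - ξ)‖ₑ ≤ eLpNormEssSup f volume :=
    (quasiMeasurePreserving_sub_left volume k).ae ae_le_eLpNormEssSup
  calc ‖conv f g k‖ₑ
      ≤ ∫⁻ ξ, ‖f (k - ξ)‖ₑ * ‖g ξ‖ₑ := enorm_conv_le f g k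
    _ ≤ ∫⁻ ξ, eLpNormEssSup f volume * ‖g ξ‖ₑ :=
        lintegral_mono_ae (hfk.mono fun ξ hξ => by gcongr)
    _ = eLpNormEssSup f volume * ∫⁻ ξ, ‖g ξ‖ₑ := lintegral_const_mul _ (by fun_prop)

theorem measurable_uncurry_convIter {X : Type*} [MeasurableSpace X] {z : X → ℝ → ℂ}
    (hz : Measurable (uncurry z)) (m : ℕ) :
    Measurable (uncurry fun x => convIter (z x) m) := by
  induction m with
  | zero => exact hz
  | succ m ih =>
    have hprod : Measurable fun p : (X × ℝ) × ℝ =>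
        convIter (z p.1.1) m (p.1.2 - p.2) * z p.1.1 p.2 :=
      (ih.comp (f := fun p : (X × ℝ) × ℝ => (p.1.1, p.1.2 - p.2)) (by fun_prop)).mul
        (hz.comp (f := fun p : (X × ℝ) × ℝ => (p.1.1, p.2)) (by fun_prop))
    exact hprod.stronglyMeasurable.integral_prod_right.measurable

theorem measurable_convIter (hf : Measurable f) (m : ℕ) : Measurable (convIter f m) :=
  (measurable_uncurry_convIter (z := fun _ : Unit => f) (hf.comp measurable_snd) m).comp
    (measurable_prodMk_left (x := ()))

theorem eLpNorm_one_convIter_le (hf : Measurable f) (m : ℕ) :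
    eLpNorm (convIter f m) 1 ≤ eLpNorm f 1 ^ (m + 1) := by
  induction m with
  | zero => simp [convIter]
  | succ m ih =>
    rw [pow_succ]
    exact (eLpNorm_one_conv_le (measurable_convIter hf m) hf).trans (by gcongr)

theorem eLpNorm_top_convIter_le (hf : Measurable f) (m : ℕ) :
    eLpNorm (convIter f m) ∞ ≤ eLpNorm f ∞ * eLpNorm f 1 ^ m := by
  induction m with
  | zero => simp [convIter]
  | succ m ih =>
    rw [pow_succ, ← mul_assoc]
    exact (eLpNorm_top_conv_le _ hf).trans (by gcongr)

theorem eLpNorm_one_smul_convIter_le {w : ℝ → ℝ} (hw : Measurable w) (hf : Measurable f) (m : ℕ) :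
    eLpNorm (w • convIter f m) 1 ≤
      min (eLpNorm w 1 * (eLpNorm f ∞ * eLpNorm f 1 ^ m))
        (eLpNorm w ∞ * eLpNorm f 1 ^ (m + 1)) := by
  refine le_min ?_ ?_
  · refine (eLpNorm_smul_le_eLpNorm_mul_eLpNorm_top 1 _ hw.aestronglyMeasurable).trans ?_
    gcongr
    exact eLpNorm_top_convIter_le hf m
  · refine (eLpNorm_smul_le_eLpNorm_top_mul_eLpNorm 1
      (measurable_convIter hf m).aestronglyMeasurable _).trans ?_
    gcongr
    exact eLpNorm_one_convIter_le hf m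

end Convolution

section HeatWeight

/-- The Fourier multiplier `e^{-b k²}` of the heat semigroup at time `b`, weighted by `|k| ^ α`. -/
def heatWeight (α b k : ℝ) : ℝ := |k| ^ α * exp (-b * k ^ 2)

variable {α b : ℝ}

theorem heatWeight_nonneg (α b k : ℝ) : 0 ≤ heatWeight α b k := by
  unfold heatWeight
  positivity

theorem measurable_heatWeight (α b : ℝ) : Measurable (heatWeight α b) := by
  unfold heatWeight
  fun_prop

theorem rpow_le_exp_sq {x : ℝ} (hx : 0 ≤ x) (hα : α ∈ Icc 0 2) : x ^ α ≤ exp (x ^ 2) := by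
  rcases le_total x 1 with hx1 | hx1
  · exact (rpow_le_one hx hx1 hα.1).trans (one_le_exp (sq_nonneg x))
  · calc x ^ α ≤ x ^ (2 : ℝ) := rpow_le_rpow_of_exponent_le hx1 hα.2
      _ = x ^ 2 := rpow_two x
      _ ≤ exp (x ^ 2) := by linarith [add_one_le_exp (x ^ 2)]

theorem heatWeight_le (hα : α ∈ Icc 0 2) (hb : 0 < b) (k : ℝ) :
    heatWeight α b k ≤ b ^ (-(α / 2)) := by
  have hscaled : b ^ (α / 2) * |k| ^ α ≤ exp (b * k ^ 2) := by
    have hsqrt : √b ^ α = b ^ (α / 2) := by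
      rw [sqrt_eq_rpow, ← rpow_mul hb.le, one_div_mul_eq_div]
    rw [← hsqrt, ← mul_rpow (sqrt_nonneg b) (abs_nonneg k)]
    simpa only [mul_pow, sq_sqrt hb.le, sq_abs] using
      rpow_le_exp_sq (x := √b * |k|) (by positivity) hα
  rw [heatWeight, neg_mul, exp_neg, rpow_neg hb.le, ← div_eq_mul_inv,
    div_le_iff₀ (exp_pos _), inv_mul_eq_div, le_div_iff₀ (by positivity), mul_comm]
  exact hscaled

theorem eLpNorm_top_heatWeight_le (hα : α ∈ Icc 0 2) (hb : 0 < b) :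
    eLpNorm (heatWeight α b) ∞ ≤ ENNReal.ofReal (b ^ (-(α / 2))) := by
  rw [eLpNorm_exponent_top]
  refine eLpNormEssSup_le_of_ae_bound (.of_forall fun k => ?_)
  rw [norm_of_nonneg (heatWeight_nonneg α b k)]
  exact heatWeight_le hα hb k

theorem eLpNorm_one_gaussian (hb : 0 < b) :
    eLpNorm (fun k : ℝ => exp (-b * k ^ 2)) 1 = ENNReal.ofReal √(π / b) := by
  rw [eLpNorm_one_eq_lintegral_enorm,
    ← ofReal_integral_norm_eq_lintegral_enorm (integrable_exp_neg_mul_sq hb)]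
  simp only [norm_eq_abs, abs_exp, integral_gaussian]

-- Half of the Gaussian absorbs the weight, the other half is integrated.
theorem eLpNorm_one_heatWeight_le (hα : α ∈ Icc 0 2) (hb : 0 < b) :
    eLpNorm (heatWeight α b) 1 ≤ ENNReal.ofReal (√π * (b / 2) ^ (-((1 + α) / 2))) := by
  have hb2 : 0 < b / 2 := by positivity
  have hhalf (k : ℝ) : heatWeight α b k = heatWeight α (b / 2) k * exp (-(b / 2) * k ^ 2) := by
    rw [heatWeight, heatWeight, mul_assoc, ← exp_add]
    ring_nf
  have hpointwise (k : ℝ) :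
      ‖heatWeight α b k‖ ≤ (b / 2) ^ (-(α / 2)) * ‖exp (-(b / 2) * k ^ 2)‖ := by
    rw [hhalf, norm_mul, norm_of_nonneg (heatWeight_nonneg _ _ _)]
    gcongr
    exact heatWeight_le hα hb2 k
  calc eLpNorm (heatWeight α b) 1 volume
      ≤ ENNReal.ofReal ((b / 2) ^ (-(α / 2))) *
          eLpNorm (fun k => exp (-(b / 2) * k ^ 2)) 1 volume :=
        eLpNorm_le_mul_eLpNorm_of_ae_le_mul (.of_forall hpointwise) 1
    _ = ENNReal.ofReal (√π * (b / 2) ^ (-((1 + α) / 2))) := by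
        rw [eLpNorm_one_gaussian hb2, ← ENNReal.ofReal_mul (by positivity), sqrt_div' _ hb2.le,
          sqrt_eq_rpow (b / 2), div_eq_mul_inv √π, ← rpow_neg hb2.le, mul_left_comm,
          ← rpow_add hb2]
        ring_nf

theorem rpow_neg_le_max_one_inv_pow {x e : ℝ} {n : ℕ} (hx : 0 < x) (he : e ∈ Icc 0 (n : ℝ)) :
    x ^ (-e) ≤ max 1 x⁻¹ ^ n := by
  calc x ^ (-e) = x⁻¹ ^ e := by rw [rpow_neg hx.le, inv_rpow hx.le]
    _ ≤ max 1 x⁻¹ ^ e := by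
        have := he.1
        gcongr
        exact le_max_right _ _
    _ ≤ max 1 x⁻¹ ^ (n : ℝ) := rpow_le_rpow_of_exponent_le (le_max_left _ _) he.2
    _ = max 1 x⁻¹ ^ n := rpow_natCast _ n

theorem exists_eLpNorm_heatWeight_le {d : ℝ} (hd : 0 < d) :
    ∃ K : ℝ, 1 ≤ K ∧ ∀ α ∈ Icc (0 : ℝ) 2, ∀ τ > 0,
      eLpNorm (heatWeight α (d * τ)) 1 ≤ ENNReal.ofReal (K * τ ^ (-((1 + α) / 2))) ∧
      eLpNorm (heatWeight α (d * τ)) ∞ ≤ ENNReal.ofReal (K * τ ^ (-(α / 2))) := by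
  set D := max 1 (d / 2)⁻¹
  have hπ : 1 ≤ √π := one_le_sqrt.2 (by linarith [pi_gt_three])
  have hD : 1 ≤ D ^ 2 := one_le_pow₀ (le_max_left _ _)
  have hpow {e : ℝ} (he0 : 0 ≤ e) (he2 : e ≤ 2) : (d / 2) ^ (-e) ≤ D ^ 2 :=
    rpow_neg_le_max_one_inv_pow (half_pos hd) ⟨he0, by exact_mod_cast he2⟩
  refine ⟨√π * D ^ 2, one_le_mul_of_one_le_of_one_le hπ hD, fun α hα τ hτ => ⟨?_, ?_⟩⟩
  · refine (eLpNorm_one_heatWeight_le hα (by positivity)).trans (ENNReal.ofReal_le_ofReal ?_)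
    rw [mul_div_right_comm, mul_rpow (by positivity) hτ.le, ← mul_assoc]
    gcongr
    exact hpow (by linarith [hα.1]) (by linarith [hα.2])
  · refine (eLpNorm_top_heatWeight_le hα (by positivity)).trans (ENNReal.ofReal_le_ofReal ?_)
    rw [mul_rpow hd.le hτ.le]
    gcongr
    calc d ^ (-(α / 2)) ≤ (d / 2) ^ (-(α / 2)) :=
          rpow_le_rpow_of_nonpos (by positivity) (by linarith) (by linarith [hα.1])
      _ ≤ D ^ 2 := hpow (by linarith [hα.1]) (by linarith [hα.2])
      _ ≤ √π * D ^ 2 := le_mul_of_one_le_left (by positivity) hπ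

end HeatWeight

section TimeIntegral

variable {t p r β γ : ℝ}

theorem rpow_neg_le_two_rpow_mul_rpow_neg {x y : ℝ} (hy : 0 < y) (hyx : y ≤ 2 * x)
    (hp : 0 ≤ p) : x ^ (-p) ≤ 2 ^ p * y ^ (-p) := by
  calc x ^ (-p) ≤ (y / 2) ^ (-p) :=
        rpow_le_rpow_of_nonpos (by positivity) (by linarith) (by linarith)
    _ = 2 ^ p * y ^ (-p) := by
        rw [div_rpow hy.le zero_le_two, rpow_neg zero_le_two, div_inv_eq_mul, mul_comm]

-- One of `x` and `y` is at least half of `x + y`.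
theorem min_rpow_neg_mul_le {x y A B : ℝ} (hx : 0 < x) (hy : 0 < y) (hA : 0 ≤ A) (hB : 0 ≤ B)
    (hp : 0 ≤ p) (hr : 0 ≤ r) :
    min (x ^ (-p) * B) (A * y ^ (-r)) ≤
      2 ^ p * (x + y) ^ (-p) * B + 2 ^ r * (x + y) ^ (-r) * A := by
  rcases le_total y x with h | h
  · calc min (x ^ (-p) * B) (A * y ^ (-r)) ≤ x ^ (-p) * B := min_le_left _ _
      _ ≤ 2 ^ p * (x + y) ^ (-p) * B := by
          gcongr
          exact rpow_neg_le_two_rpow_mul_rpow_neg (by positivity) (by linarith) hp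
      _ ≤ _ := le_add_of_nonneg_right (by positivity)
  · calc min (x ^ (-p) * B) (A * y ^ (-r)) ≤ y ^ (-r) * A := by
          rw [mul_comm _ A]
          exact min_le_right _ _
      _ ≤ 2 ^ r * (x + y) ^ (-r) * A := by
          gcongr
          exact rpow_neg_le_two_rpow_mul_rpow_neg (by positivity) (by linarith) hr
      _ ≤ _ := le_add_of_nonneg_left (by positivity)

theorem intervalIntegrable_one_add_rpow (ht : 0 ≤ t) (e : ℝ) :
    IntervalIntegrable (fun s => (1 + s) ^ e) volume 0 t := by
  refine ContinuousOn.intervalIntegrable fun s hs => ?_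
  rw [uIcc_of_le ht] at hs
  have : 1 + s ≠ 0 := by linarith [hs.1]
  exact ContinuousAt.continuousWithinAt (by fun_prop (disch := simp [this]))

theorem integral_one_add_rpow_neg_le (ht : 0 ≤ t) (hβ : 1 < β) :
    ∫ s in (0 : ℝ)..t, (1 + s) ^ (-β) ≤ 1 / (β - 1) := by
  have h0 : (0 : ℝ) ∉ uIcc (1 + 0) (1 + t) := by
    rw [uIcc_of_le (by linarith)]
    exact fun h => by linarith [h.1]
  have hnn : 0 ≤ (1 + t) ^ (1 - β) := by positivity
  calc ∫ s in (0 : ℝ)..t, (1 + s) ^ (-β) = (1 - (1 + t) ^ (1 - β)) / (β - 1) := by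
        rw [intervalIntegral.integral_comp_add_left (fun s => s ^ (-β)),
          integral_rpow (.inr ⟨by linarith, h0⟩), neg_add_eq_sub, add_zero, one_rpow,
          ← neg_div_neg_eq, neg_sub, neg_sub]
    _ ≤ 1 / (β - 1) := by
        have : 0 ≤ β - 1 := by linarith
        gcongr
        linarith

theorem intervalIntegrable_sub_rpow_neg (t : ℝ) (hγ : γ < 1) :
    IntervalIntegrable (fun s => (t - s) ^ (-γ)) volume 0 t := by
  simpa using ((intervalIntegral.intervalIntegrable_rpow' (a := 0) (b := t)
    (neg_lt_neg hγ)).comp_sub_left t).symm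

theorem integral_sub_rpow_neg (t : ℝ) (hγ : γ < 1) :
    ∫ s in (0 : ℝ)..t, (t - s) ^ (-γ) = t ^ (1 - γ) / (1 - γ) := by
  rw [intervalIntegral.integral_comp_sub_left (fun s => s ^ (-γ)), sub_self, sub_zero,
    integral_rpow (.inl (neg_lt_neg hγ)), neg_add_eq_sub, zero_rpow (by linarith), sub_zero]

theorem lintegral_min_rpow_neg_le (ht : 0 ≤ t) (hp : 0 ≤ p) (hr : 0 ≤ r) (hβ : 1 < β)
    (hγ : γ < 1) :
    ∫⁻ s in Ioo 0 t, ENNReal.ofReal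
        (min ((t - s) ^ (-p) * (1 + s) ^ (-β)) ((t - s) ^ (-γ) * (1 + s) ^ (-r))) ≤
      ENNReal.ofReal (2 ^ p * (1 + t) ^ (-p) * (1 / (β - 1)) +
        2 ^ r * (1 + t) ^ (-r) * (t ^ (1 - γ) / (1 - γ))) := by
  set early : ℝ → ℝ := fun s => 2 ^ p * (1 + t) ^ (-p) * (1 + s) ^ (-β)
  set late : ℝ → ℝ := fun s => 2 ^ r * (1 + t) ^ (-r) * (t - s) ^ (-γ)
  have hearly : IntervalIntegrable early volume 0 t :=
    (intervalIntegrable_one_add_rpow ht (-β)).const_mul _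
  have hlate : IntervalIntegrable late volume 0 t :=
    (intervalIntegrable_sub_rpow_neg t hγ).const_mul _
  have hnonneg : ∀ s ∈ Ioc 0 t, 0 ≤ early s + late s := fun s hs => by
    have : 0 ≤ 1 + s := by linarith [hs.1]
    have : 0 ≤ t - s := by linarith [hs.2]
    positivity
  calc _ ≤ ∫⁻ s in Ioo 0 t, ENNReal.ofReal (early s + late s) := by
        refine setLIntegral_mono' measurableSet_Ioo fun s hs => ENNReal.ofReal_le_ofReal ?_
        have hx : 0 < t - s := sub_pos.2 hs.2
        have hy : 0 < 1 + s := by linarith [hs.1]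
        have := min_rpow_neg_mul_le hx hy (rpow_nonneg hx.le (-γ)) (rpow_nonneg hy.le (-β)) hp hr
        rwa [show t - s + (1 + s) = 1 + t by ring] at this
    _ = ENNReal.ofReal (∫ s in (0 : ℝ)..t, early s + late s) := by
        rw [restrict_Ioo_eq_restrict_Ioc, intervalIntegral.integral_of_le ht,
          ofReal_integral_eq_lintegral_ofReal (hearly.add hlate).1
            ((ae_restrict_iff' measurableSet_Ioc).2 (.of_forall hnonneg))]
    _ ≤ _ := by
        rw [intervalIntegral.integral_add hearly hlate, intervalIntegral.integral_const_mul,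
          intervalIntegral.integral_const_mul, integral_sub_rpow_neg t hγ]
        gcongr
        exact integral_one_add_rpow_neg_le ht hβ

theorem lintegral_duhamel_kernel_le {α : ℝ} (ht : 0 ≤ t) (hα0 : 0 ≤ α) (hα2 : α < 2) :
    ∫⁻ s in Ioo 0 t, ENNReal.ofReal
        (min ((t - s) ^ (-((1 + α) / 2)) * (1 + s) ^ (-(3 / 2) : ℝ))
          ((t - s) ^ (-(α / 2)) * (1 + s) ^ (-2 : ℝ))) ≤
      ENNReal.ofReal (8 * (1 + 1 / (2 - α)) * (1 + t) ^ (-(1 + α) / 2)) := by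
  refine (lintegral_min_rpow_neg_le ht (by linarith) zero_le_two (by norm_num)
    (by linarith)).trans (ENNReal.ofReal_le_ofReal ?_)
  have hα : 0 < 2 - α := by linarith
  have hconst : (2 : ℝ) ^ ((1 + α) / 2) ≤ 4 := by
    calc (2 : ℝ) ^ ((1 + α) / 2) ≤ 2 ^ (2 : ℝ) :=
          rpow_le_rpow_of_exponent_le one_le_two (by linarith)
      _ = 4 := by norm_num
  have hlate : (1 + t) ^ (-2 : ℝ) * t ^ (1 - α / 2) ≤ (1 + t) ^ (-(1 + α) / 2) := by
    calc (1 + t) ^ (-2 : ℝ) * t ^ (1 - α / 2)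
        ≤ (1 + t) ^ (-2 : ℝ) * (1 + t) ^ (1 - α / 2) := by
          gcongr
          · linarith
          · linarith
      _ = (1 + t) ^ (-2 + (1 - α / 2)) := (rpow_add (by linarith) _ _).symm
      _ ≤ (1 + t) ^ (-(1 + α) / 2) :=
          rpow_le_rpow_of_exponent_le (by linarith) (by linarith)
  calc 2 ^ ((1 + α) / 2) * (1 + t) ^ (-((1 + α) / 2)) * (1 / (3 / 2 - 1)) +
        2 ^ (2 : ℝ) * (1 + t) ^ (-2 : ℝ) * (t ^ (1 - α / 2) / (1 - α / 2))
      = 2 ^ ((1 + α) / 2) * (1 + t) ^ (-(1 + α) / 2) * 2 +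
          4 * ((1 + t) ^ (-2 : ℝ) * t ^ (1 - α / 2)) * (2 / (2 - α)) := by
        rw [show 1 - α / 2 = (2 - α) / 2 by ring, neg_div]
        norm_num
        field_simp
    _ ≤ 4 * (1 + t) ^ (-(1 + α) / 2) * 2 +
          4 * (1 + t) ^ (-(1 + α) / 2) * (2 / (2 - α)) := by gcongr
    _ = 8 * (1 + 1 / (2 - α)) * (1 + t) ^ (-(1 + α) / 2) := by ring

end TimeIntegral

theorem norm_expc (x y : ℝ) : ‖expc x y‖ = exp x := by
  simp [expc, Complex.norm_exp]

theorem measurable_expc {X : Type*} [MeasurableSpace X] {x y : X → ℝ} (hx : Measurable x)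
    (hy : Measurable y) : Measurable fun a => expc (x a) (y a) := by
  unfold expc
  fun_prop

theorem integral_norm_integral_le_of_lintegral_eLpNorm_le {X Y E : Type*} [MeasurableSpace X]
    [MeasurableSpace Y] {μ : Measure X} {ν : Measure Y} [SFinite μ] [SFinite ν]
    [NormedAddCommGroup E] [NormedSpace ℝ E] {G : Y → X → E}
    (hG : StronglyMeasurable (uncurry G)) {R : ℝ} (hR : 0 ≤ R)
    (h : ∫⁻ y, eLpNorm (G y) 1 μ ∂ν ≤ ENNReal.ofReal R) :
    ∫ x, ‖∫ y, G y x ∂ν‖ ∂μ ≤ R := by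
  simp only [eLpNorm_one_eq_lintegral_enorm] at h
  rw [lintegral_lintegral_swap hG.enorm.aemeasurable] at h
  refine (le_norm_self _).trans ((norm_integral_le_lintegral_norm _).trans ?_)
  refine ENNReal.toReal_le_of_le_ofReal hR ((lintegral_mono fun x => ?_).trans h)
  rw [norm_norm, ofReal_norm]
  exact enorm_integral_le_lintegral_enorm _

theorem integral_rpow_mul_norm_duhamel_le {d t α R : ℝ} (ht : 0 ≤ t) {θ : ℝ → ℝ → ℝ}
    (hθ : Measurable (uncurry θ)) {g : ℝ → ℝ → ℂ} (hg : Measurable (uncurry g)) (hR : 0 ≤ R)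
    (h : ∫⁻ s in Ioo 0 t, eLpNorm (heatWeight α (d * (t - s)) • g s) 1 ≤ ENNReal.ofReal R) :
    ∫ k : ℝ, |k| ^ α *
      ‖∫ s in (0 : ℝ)..t, expc (-(k ^ 2 * d * (t - s))) (θ k s) * g s k‖ ≤ R := by
  set G : ℝ → ℝ → ℂ := fun s k =>
    |k| ^ α • (expc (-(k ^ 2 * d * (t - s))) (θ k s) * g s k)
  have hG : Measurable (uncurry G) :=
    Measurable.smul (f := fun p : ℝ × ℝ => |p.2| ^ α) (by fun_prop)
      ((measurable_expc (x := fun p : ℝ × ℝ => -(p.2 ^ 2 * d * (t - p.1))) (by fun_prop)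
        (hθ.comp measurable_swap)).mul hg)
  have hnorm (s : ℝ) : eLpNorm (G s) 1 = eLpNorm (heatWeight α (d * (t - s)) • g s) 1 := by
    refine eLpNorm_congr_norm_ae (.of_forall fun k => ?_)
    rw [Pi.smul_apply', norm_smul, norm_smul, norm_mul, norm_expc, heatWeight, norm_mul,
      norm_of_nonneg (exp_pos _).le, mul_assoc]
    ring_nf
  have hpull (k : ℝ) :
      |k| ^ α * ‖∫ s in (0 : ℝ)..t, expc (-(k ^ 2 * d * (t - s))) (θ k s) * g s k‖ =
        ‖∫ s in Ioo 0 t, G s k‖ := by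
    rw [integral_smul, norm_smul, norm_of_nonneg (by positivity),
      intervalIntegral.integral_of_le ht, integral_Ioc_eq_integral_Ioo]
  simp only [hpull]
  exact integral_norm_integral_le_of_lintegral_eLpNorm_le hG.stronglyMeasurable hR
    (by simpa only [hnorm] using h)

theorem mul_rpow_neg_half_pow_le {s δ e : ℝ} {n : ℕ} (hs : 0 ≤ s) (hδ : 0 ≤ δ)
    (hn : 2 * e ≤ n) :
    (δ * (1 + s) ^ (-(1 : ℝ) / 2)) ^ n ≤ δ ^ n * (1 + s) ^ (-e) := by
  rw [mul_pow, ← rpow_mul_natCast (by linarith)]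
  gcongr
  · linarith
  · linarith

theorem eLpNorm_one_smul_convIter_le_of_decay {w : ℝ → ℝ} (hw : Measurable w) {P Q : ℝ}
    (hP : 0 ≤ P) (hQ : 0 ≤ Q) (hw1 : eLpNorm w 1 ≤ ENNReal.ofReal P)
    (hwtop : eLpNorm w ∞ ≤ ENNReal.ofReal Q) {f : ℝ → ℂ} (hf : Measurable f) {s δ : ℝ}
    (hs : 0 ≤ s) (hδ : 0 ≤ δ) (hfi : Integrable f)
    (hf1 : ∫ k, ‖f k‖ ≤ δ * (1 + s) ^ (-(1 : ℝ) / 2)) (hftop : ∀ᵐ k, ‖f k‖ ≤ δ) {m : ℕ}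
    (hm : 3 ≤ m) :
    eLpNorm (w • convIter f m) 1 ≤ ENNReal.ofReal
      (δ ^ (m + 1) * min (P * (1 + s) ^ (-(3 / 2) : ℝ)) (Q * (1 + s) ^ (-2 : ℝ))) := by
  set a := δ * (1 + s) ^ (-(1 : ℝ) / 2)
  have ha : 0 ≤ a := by positivity
  have hm' : (3 : ℝ) ≤ m := by exact_mod_cast hm
  have hL1 : eLpNorm f 1 ≤ ENNReal.ofReal a := by
    rw [eLpNorm_one_eq_lintegral_enorm, ← ofReal_integral_norm_eq_lintegral_enorm hfi]
    exact ENNReal.ofReal_le_ofReal hf1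
  have hLtop : eLpNorm f ∞ ≤ ENNReal.ofReal δ := by
    rw [eLpNorm_exponent_top]
    exact eLpNormEssSup_le_of_ae_bound hftop
  calc eLpNorm (w • convIter f m) 1 volume
      ≤ min (ENNReal.ofReal P * (ENNReal.ofReal δ * ENNReal.ofReal a ^ m))
          (ENNReal.ofReal Q * ENNReal.ofReal a ^ (m + 1)) := by
        refine (eLpNorm_one_smul_convIter_le hw hf m).trans ?_
        gcongr
    _ = ENNReal.ofReal (min (P * (δ * a ^ m)) (Q * a ^ (m + 1))) := by
        rw [ENNReal.ofReal_min, ENNReal.ofReal_mul hP,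
          ENNReal.ofReal_mul (q := a ^ m) hδ, ENNReal.ofReal_mul hQ, ENNReal.ofReal_pow ha,
          ENNReal.ofReal_pow ha]
    _ ≤ ENNReal.ofReal (min (P * (δ * (δ ^ m * (1 + s) ^ (-(3 / 2) : ℝ))))
          (Q * (δ ^ (m + 1) * (1 + s) ^ (-2 : ℝ)))) := by
        gcongr
        · exact mul_rpow_neg_half_pow_le hs hδ (by linarith)
        · exact mul_rpow_neg_half_pow_le hs hδ (by push_cast; linarith)
    _ = _ := by
        rw [mul_min_of_nonneg _ _ (by positivity)]
        ring_nf

theorem irrelevant_convolution_power_estimate_general {d α₀ : ℝ} (hd : 0 < d) (hα₀ : α₀ < 2) :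
    ∃ C : ℝ, 1 ≤ C ∧
      ∀ θ : ℝ → ℝ → ℝ, Measurable (uncurry θ) → ∀ m : ℕ, 3 ≤ m →
        ∀ t : ℝ, 0 ≤ t → ∀ δ : ℝ, 0 ≤ δ →
          ∀ z : ℝ → ℝ → ℂ, Measurable (uncurry z) →
            (∀ s ∈ Icc (0 : ℝ) t,
              Integrable (z s) ∧
              (∫ k : ℝ, ‖z s k‖) ≤ δ * (1 + s) ^ (-(1 : ℝ) / 2) ∧
              (∀ᵐ k : ℝ, ‖z s k‖ ≤ δ)) →
            ∀ α ∈ Icc 0 α₀,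
              (∫ k : ℝ, |k| ^ α *
                  ‖∫ s in (0 : ℝ)..t,
                      expc (-(k ^ 2 * d * (t - s))) (θ k s) * convIter (z s) m k‖) ≤
                C * δ ^ (m + 1) * (1 + t) ^ (-(1 + α) / 2) := by
  obtain ⟨K, hK, hweight⟩ := exists_eLpNorm_heatWeight_le hd
  have hK0 : 0 ≤ K := by linarith
  have hinv : 0 < 1 / (2 - α₀) := one_div_pos.2 (by linarith)
  refine ⟨K * (8 * (1 + 1 / (2 - α₀))), by nlinarith,
    fun θ hθ m hm t ht δ hδ z hz hzs α hα => ?_⟩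
  have hα2 : α < 2 := hα.2.trans_lt hα₀
  refine integral_rpow_mul_norm_duhamel_le ht hθ (measurable_uncurry_convIter hz m)
    (by positivity) ?_
  calc ∫⁻ s in Ioo 0 t, eLpNorm (heatWeight α (d * (t - s)) • convIter (z s) m) 1 volume
      ≤ ∫⁻ s in Ioo 0 t, ENNReal.ofReal (K * δ ^ (m + 1)) * ENNReal.ofReal
          (min ((t - s) ^ (-((1 + α) / 2)) * (1 + s) ^ (-(3 / 2) : ℝ))
            ((t - s) ^ (-(α / 2)) * (1 + s) ^ (-2 : ℝ))) := by
        refine setLIntegral_mono' measurableSet_Ioo fun s hs => ?_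
        obtain ⟨hzi, hz1, hztop⟩ := hzs s (Ioo_subset_Icc_self hs)
        have hτ : 0 < t - s := sub_pos.2 hs.2
        obtain ⟨hw1, hwtop⟩ := hweight α ⟨hα.1, hα2.le⟩ (t - s) hτ
        refine (eLpNorm_one_smul_convIter_le_of_decay (measurable_heatWeight _ _) (by positivity)
          (by positivity) hw1 hwtop (hz.comp measurable_prodMk_left) hs.1.le hδ hzi hz1 hztop
          hm).trans_eq ?_
        rw [← ENNReal.ofReal_mul (by positivity), mul_assoc K, mul_assoc K,
          ← mul_min_of_nonneg _ _ hK0, mul_left_comm, mul_assoc K]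
    _ ≤ ENNReal.ofReal (K * δ ^ (m + 1)) *
          ENNReal.ofReal (8 * (1 + 1 / (2 - α)) * (1 + t) ^ (-(1 + α) / 2)) := by
        rw [lintegral_const_mul _ (by fun_prop)]
        gcongr
        exact lintegral_duhamel_kernel_le ht hα.1 hα2
    _ ≤ ENNReal.ofReal (K * δ ^ (m + 1)) *
          ENNReal.ofReal (8 * (1 + 1 / (2 - α₀)) * (1 + t) ^ (-(1 + α) / 2)) := by
        gcongr
        exact hα.2
    _ = ENNReal.ofReal (K * (8 * (1 + 1 / (2 - α₀))) * δ ^ (m + 1) *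
          (1 + t) ^ (-(1 + α) / 2)) := by
        rw [← ENNReal.ofReal_mul (by positivity)]
        ring_nf

/-- irrelevant oscillatory Duhamel term: for `q ≥ 4` and `j ∈ {0,1}`,
`∫ |k|^j |∫_0^t e^{-k²d(t-s)+icks} z^{*q}(k,s) ds| dk ≤ C δ² (1+t)^{-(1+j)/2}`. -/
theorem irrelevant_convolution_power_estimate (d c : ℝ) (hd : 0 < d) (q : ℕ) (hq : 4 ≤ q) :
    ∃ C : ℝ, 1 ≤ C ∧
      ∀ t : ℝ, 0 ≤ t → ∀ δ : ℝ, 0 < δ → δ ≤ 1 →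
        ∀ z : ℝ → ℝ → ℂ, Measurable (Function.uncurry z) →
          (∀ s ∈ Set.Icc (0 : ℝ) t,
            Integrable (z s) ∧
            (∫ k : ℝ, ‖z s k‖) ≤ δ * (1 + s) ^ (-(1 : ℝ) / 2) ∧
            (∀ᵐ k : ℝ, ‖z s k‖ ≤ δ)) →
          ∀ j : ℕ, j ≤ 1 →
            (∫ k : ℝ, |k| ^ j *
                ‖∫ s in (0 : ℝ)..t,
                    expc (-(k ^ 2 * d * (t - s))) (c * k * s) * convIter (z s) (q - 1) k‖) ≤
              C * δ ^ 2 * (1 + t) ^ (-(1 + (j : ℝ)) / 2) := by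
  obtain ⟨C, hC, hbound⟩ := irrelevant_convolution_power_estimate_general hd one_lt_two
  refine ⟨C, hC, fun t ht δ hδ hδ1 z hz hzs j hj => ?_⟩
  have hestimate := hbound (fun k s => c * k * s) (by unfold uncurry; fun_prop) (q - 1) (by omega)
    t ht δ hδ.le z hz hzs j ⟨by positivity, by exact_mod_cast hj⟩
  simp only [rpow_natCast] at hestimate
  refine hestimate.trans ?_
  have hpow : δ ^ (q - 1 + 1) ≤ δ ^ 2 := pow_le_pow_of_le_one hδ.le hδ1 (by omega)
  gcongr
end
end

section
/- Let d > 0, c ∈ ℝ and q ∈ ℕ with q ≥ 4. There exists a constant C ≥ 1, depending only on d, c and q, such that the following holds for every t ≥ 0 and δ ∈ (0,1]: if z(·,s) ∈ W^{1,1}(ℝ,ℂ) for each s ∈ [0,t] with s ↦ z(·,s) measurable, and ‖z(·,s)‖_{L¹} ≤ δ (1+s)^{−1/2}, ‖z(·,s)‖_{L^∞} ≤ δ and ‖∂_k z(·,s)‖_{L¹} ≤ δ for all s ∈ [0,t], then for j ∈ {0,1}: ∫_ℝ | k^j ∂_k ( ∫_0^t e^{−k² d (t−s) + i c k s} z^{*q}(k,s)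 ds ) | dk ≤ C δ² (1+t)^{−j/2}, where ∂_k denotes the weak derivative in k. -/
open MeasureTheory Real

noncomputable section

/-!
For `0 < s < t` put `u = (1+s)^{-1/2}` and `v = (t-s)^{-1/2}`. Young's inequality gives
`w = z^{*q}` the bounds `‖w‖_{L^∞} ≲ u³`, `‖w‖_{L¹} ≲ u⁴` and `‖∂_k w‖_{L¹} ≲ u³`. The product rule
splits the derivative of the integrand into a heat term, with factor `2dk(t-s)`, an oscillatory
term, with factor `ics`, and the term with `∂_k w`. Gaussian moments bound the weighted `L¹` norms
of the first and the third by `u³vʲ`. The factor `s` of the oscillatory term is absorbed by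
`s u² ≤ 1`, and putting either `w` in `L^∞` and the Gaussian in `L¹` or conversely leaves
`min (u vʲ⁺¹) (u² vʲ)`. For `j = 1`, multiplying by `√(1+t) ≤ u⁻¹ + v⁻¹` and using the better of
the two bounds for each summand gives `u³ + u v`, whose integral over `[0,t]` is bounded
uniformly in `t`.
-/

lemma integrable_ofReal_mul {g : ℝ → ℝ} {u : ℝ → ℂ} (hg : Continuous g)
    (hgc : HasCompactSupport g) (hu : LocallyIntegrable u) :
    Integrable fun k => (g k : ℂ) * u k := by
  simpa using hu.integrable_smul_left_of_hasCompactSupport hg hgc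

section ProductIntegrals

variable {α β E : Type*} [MeasurableSpace α] [MeasurableSpace β] [NormedAddCommGroup E]
  {μ : Measure α} {ν : Measure β} {H : α → β → E}

lemma integrable_uncurry_of_integral_norm_le [SFinite ν]
    (hH : AEStronglyMeasurable (Function.uncurry H) (μ.prod ν)) {b : α → ℝ} (hb : Integrable b μ)
    (hint : ∀ᵐ x ∂μ, Integrable (H x) ν) (hle : ∀ᵐ x ∂μ, ∫ y, ‖H x y‖ ∂ν ≤ b x) :
    Integrable (Function.uncurry H) (μ.prod ν) := by
  refine (integrable_prod_iff hH).2 ⟨hint, hb.mono' hH.norm.integral_prod_right' ?_⟩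
  filter_upwards [hle] with x hx
  rwa [Real.norm_of_nonneg (integral_nonneg fun _ => norm_nonneg _)]

lemma integral_norm_integral_le [NormedSpace ℝ E] [SFinite μ] [SFinite ν]
    (hH : Integrable (Function.uncurry H) (μ.prod ν)) :
    ∫ y, ‖∫ x, H x y ∂μ‖ ∂ν ≤ ∫ x, ∫ y, ‖H x y‖ ∂ν ∂μ :=
  calc ∫ y, ‖∫ x, H x y ∂μ‖ ∂ν ≤ ∫ y, ∫ x, ‖H x y‖ ∂μ ∂ν :=
        integral_mono hH.integral_prod_right.norm hH.norm.integral_prod_right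
          fun _ => norm_integral_le_integral_norm _
    _ = ∫ x, ∫ y, ‖H x y‖ ∂ν ∂μ := (integral_integral_swap hH.norm).symm

end ProductIntegrals

namespace HasWeakDeriv

variable {v v' : ℝ → ℂ}

lemma integral_deriv_mul_of_complex (h : HasWeakDeriv v v') {ψ : ℝ → ℂ}
    (hψ : ContDiff ℝ (⊤ : ℕ∞) ψ) (hc : HasCompactSupport ψ) :
    ∫ k, deriv ψ k * v k = -∫ k, ψ k * v' k := by
  have hre : ContDiff ℝ (⊤ : ℕ∞) fun k => (ψ k).re := Complex.reCLM.contDiff.comp hψ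
  have him : ContDiff ℝ (⊤ : ℕ∞) fun k => (ψ k).im := Complex.imCLM.contDiff.comp hψ
  have hcre : HasCompactSupport fun k => (ψ k).re := hc.comp_left Complex.zero_re
  have hcim : HasCompactSupport fun k => (ψ k).im := hc.comp_left Complex.zero_im
  have deriv_eq (k : ℝ) : deriv ψ k = Complex.ofReal (deriv (fun k => (ψ k).re) k)
      + Complex.ofReal (deriv (fun k => (ψ k).im) k) * Complex.I := by
    have hder := (((hre.differentiable (by simp)) k).hasDerivAt.ofReal_comp).add
      ((((him.differentiable (by simp)) k).hasDerivAt.ofReal_comp).mul_const Complex.I)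
    rw [← hder.deriv]
    exact congrArg (deriv · k) (funext fun x => (Complex.re_add_im (ψ x)).symm)
  have split {f g : ℝ → ℝ} {u : ℝ → ℂ} (hf : Continuous f) (hfc : HasCompactSupport f)
      (hg : Continuous g) (hgc : HasCompactSupport g) (hu : LocallyIntegrable u) :
      ∫ k, ((f k : ℂ) + g k * Complex.I) * u k
        = (∫ k, (f k : ℂ) * u k) + Complex.I * ∫ k, (g k : ℂ) * u k := by
    rw [← integral_const_mul, ← integral_add (integrable_ofReal_mul hf hfc hu)
      ((integrable_ofReal_mul hg hgc hu).const_mul _)]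
    exact integral_congr_ae (.of_forall fun k => by ring)
  calc ∫ k, deriv ψ k * v k
      = (∫ k, Complex.ofReal (deriv (fun k => (ψ k).re) k) * v k)
        + Complex.I * ∫ k, Complex.ofReal (deriv (fun k => (ψ k).im) k) * v k := by
        simp_rw [deriv_eq]
        exact split (hre.continuous_deriv (by simp)) hcre.deriv
          (him.continuous_deriv (by simp)) hcim.deriv h.1
    _ = -((∫ k, ((ψ k).re : ℂ) * v' k) + Complex.I * ∫ k, ((ψ k).im : ℂ) * v' k) := by
        rw [h.2.2 _ hre hcre, h.2.2 _ him hcim]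
        ring
    _ = -∫ k, ψ k * v' k := by
        rw [← split hre.continuous hcre him.continuous hcim h.2.1]
        simp only [Complex.re_add_im]

lemma mul_left (h : HasWeakDeriv v v') {e : ℝ → ℂ} (he : ContDiff ℝ (⊤ : ℕ∞) e) :
    HasWeakDeriv (fun k => e k * v k) (fun k => deriv e k * v k + e k * v' k) := by
  have hev : LocallyIntegrable fun k => e k * v k := h.1.continuous_mul he.continuous
  have hdev : LocallyIntegrable fun k => deriv e k * v k :=
    h.1.continuous_mul (he.continuous_deriv (by simp))
  have hev' : LocallyIntegrable fun k => e k * v' k := h.2.1.continuous_mul he.continuous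
  refine ⟨hev, hdev.add hev', fun φ hφ hφc => ?_⟩
  have hφ' : ContDiff ℝ (⊤ : ℕ∞) fun k => (φ k : ℂ) := Complex.ofRealCLM.contDiff.comp hφ
  have hφc' : HasCompactSupport fun k => (φ k : ℂ) := hφc.comp_left Complex.ofReal_zero
  have deriv_test (k : ℝ) : deriv (fun k => (φ k : ℂ) * e k) k
      = Complex.ofReal (deriv φ k) * e k + (φ k : ℂ) * deriv e k :=
    ((((hφ.differentiable (by simp)) k).hasDerivAt.ofReal_comp).mul
      ((he.differentiable (by simp)) k).hasDerivAt).deriv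
  have i_ev := integrable_ofReal_mul (hφ.continuous_deriv (by simp)) hφc.deriv hev
  have i_dev := integrable_ofReal_mul hφ.continuous hφc hdev
  have i_ev' := integrable_ofReal_mul hφ.continuous hφc hev'
  have by_parts := h.integral_deriv_mul_of_complex (hφ'.mul he) hφc'.mul_right
  simp only [deriv_test, add_mul, mul_assoc] at by_parts
  rw [integral_add i_ev i_dev] at by_parts
  simp_rw [mul_add]
  rw [integral_add i_dev i_ev']
  linear_combination by_parts

lemma const_mul (h : HasWeakDeriv v v') (a : ℂ) :
    HasWeakDeriv (fun k => a * v k) (fun k => a * v' k) := by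
  simpa using h.mul_left (e := fun _ => a) contDiff_const

lemma comp_sub_right (h : HasWeakDeriv v v') (a : ℝ) :
    HasWeakDeriv (fun k => v (k - a)) (fun k => v' (k - a)) := by
  have translate {u : ℝ → ℂ} (hu : LocallyIntegrable u) : LocallyIntegrable fun k => u (k - a) :=
    (locallyIntegrable_map_homeomorph (Homeomorph.subRight a)).1 <| by
      simpa [map_sub_right_eq_self] using hu
  refine ⟨translate h.1, translate h.2.1, fun φ hφ hφc => ?_⟩
  have by_parts := h.2.2 (fun k => φ (k + a)) (hφ.comp (contDiff_id.add contDiff_const))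
    (hφc.comp_homeomorph (Homeomorph.addRight a))
  simp only [deriv_comp_add_const] at by_parts
  rw [← integral_sub_right_eq_self _ a,
    ← integral_sub_right_eq_self (fun k => _ * v' k) a] at by_parts
  simpa using by_parts

lemma integral {α : Type*} [MeasurableSpace α] {μ : Measure α} [SFinite μ] {F F' : α → ℝ → ℂ}
    (hF : Integrable (Function.uncurry F) (μ.prod volume))
    (hF' : Integrable (Function.uncurry F') (μ.prod volume))
    (h : ∀ᵐ s ∂μ, HasWeakDeriv (F s) (F' s)) :
    HasWeakDeriv (fun k => ∫ s, F s k ∂μ) (fun k => ∫ s, F' s k ∂μ) := by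
  refine ⟨hF.integral_prod_right.locallyIntegrable, hF'.integral_prod_right.locallyIntegrable,
    fun φ hφ hφc => ?_⟩
  have swap {g : ℝ → ℝ} {H : α → ℝ → ℂ} (hg : Continuous g) (hgc : HasCompactSupport g)
      (hH : Integrable (Function.uncurry H) (μ.prod volume)) :
      ∫ k, (g k : ℂ) * ∫ s, H s k ∂μ = ∫ s, (∫ k, (g k : ℂ) * H s k) ∂μ := by
    obtain ⟨C, hC⟩ := hgc.exists_bound_of_continuous hg
    simp_rw [← integral_const_mul]
    refine (integral_integral_swap (f := fun s k => (g k : ℂ) * H s k) ?_).symm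
    refine hH.bdd_mul (f := fun p : α × ℝ => (g p.2 : ℂ)) (c := C) ?_ (.of_forall fun p => ?_)
    · exact ((Complex.measurable_ofReal.comp hg.measurable).comp
        measurable_snd).aestronglyMeasurable
    · simpa using hC p.2
  rw [swap (hφ.continuous_deriv (by simp)) hφc.deriv hF, swap hφ.continuous hφc hF',
    ← integral_neg]
  refine integral_congr_ae ?_
  filter_upwards [h] with s hs
  exact hs.2.2 φ hφ hφc

end HasWeakDeriv

section Convolution

variable {f g : ℝ → ℂ}

lemma conv_eq_convolution (f g : ℝ → ℂ) :
    conv f g = convolution f g (ContinuousLinearMap.mul ℂ ℂ) volume :=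
  funext fun _ => convolution_mul_swap.symm

lemma conv_eq_integral_sub (f g : ℝ → ℂ) (k : ℝ) : conv f g k = ∫ η, f η * g (k - η) := by
  rw [conv_eq_convolution, convolution_mul]

lemma integrable_conv (hf : Integrable f) (hg : Integrable g) : Integrable (conv f g) := by
  simpa only [conv_eq_convolution] using hf.integrable_convolution _ hg

lemma integrable_uncurry_mul_comp_sub (hf : Integrable f) (hg : Integrable g) :
    Integrable (Function.uncurry fun η k : ℝ => f η * g (k - η)) (volume.prod volume) := by
  simpa [Function.comp_def, Function.uncurry_def] using
    (hf.convolution_integrand (ContinuousLinearMap.mul ℂ ℂ) hg).swap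

lemma integral_norm_conv_le (hf : Integrable f) (hg : Integrable g) :
    ∫ k, ‖conv f g k‖ ≤ (∫ k, ‖f k‖) * ∫ k, ‖g k‖ :=
  calc ∫ k, ‖conv f g k‖ ≤ ∫ η, ∫ k, ‖f η * g (k - η)‖ := by
        simp only [conv_eq_integral_sub]
        exact integral_norm_integral_le (integrable_uncurry_mul_comp_sub hf hg)
    _ = (∫ k, ‖f k‖) * ∫ k, ‖g k‖ := by
        simp only [norm_mul, integral_const_mul, integral_sub_right_eq_self fun x => ‖g x‖,
          integral_mul_const]

lemma norm_conv_le (hf : Integrable f) {M : ℝ} (hg : ∀ᵐ k, ‖g k‖ ≤ M) (k : ℝ) :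
    ‖conv f g k‖ ≤ (∫ k, ‖f k‖) * M :=
  calc ‖conv f g k‖ ≤ ∫ ξ, ‖f (k - ξ)‖ * M := by
        refine norm_integral_le_of_norm_le ((hf.comp_sub_left k).norm.mul_const M) ?_
        filter_upwards [hg] with ξ hξ
        rw [norm_mul]
        gcongr
    _ = (∫ k, ‖f k‖) * M := by
        rw [integral_mul_const, integral_sub_left_eq_self fun x => ‖f x‖]

lemma HasWeakDeriv.conv_right {g' : ℝ → ℂ} (h : HasWeakDeriv g g') (hf : Integrable f)
    (hg : Integrable g) (hg' : Integrable g') : HasWeakDeriv (conv f g) (conv f g') := by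
  simp only [funext (conv_eq_integral_sub f _)]
  exact .integral (integrable_uncurry_mul_comp_sub hf hg) (integrable_uncurry_mul_comp_sub hf hg')
    (.of_forall fun η => (h.comp_sub_right η).const_mul (f η))

lemma integrable_convIter (hf : Integrable f) : ∀ m, Integrable (convIter f m)
  | 0 => hf
  | m + 1 => integrable_conv (integrable_convIter hf m) hf

lemma integral_norm_convIter_le (hf : Integrable f) :
    ∀ m, ∫ k, ‖convIter f m k‖ ≤ (∫ k, ‖f k‖) ^ (m + 1)
  | 0 => by simp [convIter]
  | m + 1 =>
    calc ∫ k, ‖convIter f (m + 1) k‖ ≤ (∫ k, ‖convIter f m k‖) * ∫ k, ‖f k‖ :=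
          integral_norm_conv_le (integrable_convIter hf m) hf
      _ ≤ (∫ k, ‖f k‖) ^ (m + 1) * ∫ k, ‖f k‖ := by
          gcongr
          exact integral_norm_convIter_le hf m
      _ = (∫ k, ‖f k‖) ^ (m + 2) := (pow_succ _ _).symm

variable {α : Type*} [MeasurableSpace α] {F G : α → ℝ → ℂ}

lemma measurable_uncurry_conv (hF : Measurable (Function.uncurry F))
    (hG : Measurable (Function.uncurry G)) :
    Measurable (Function.uncurry fun s => conv (F s) (G s)) := by
  have h : Measurable fun p : (α × ℝ) × ℝ =>
      Function.uncurry F (p.1.1, p.1.2 - p.2) * Function.uncurry G (p.1.1, p.2) :=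
    (hF.comp (by fun_prop)).mul (hG.comp (by fun_prop))
  exact (h.stronglyMeasurable.integral_prod_right' (ν := volume)).measurable

lemma measurable_uncurry_convIter_s13 (hF : Measurable (Function.uncurry F)) :
    ∀ m, Measurable (Function.uncurry fun s => convIter (F s) m)
  | 0 => hF
  | m + 1 => measurable_uncurry_conv (measurable_uncurry_convIter_s13 hF m) hF

end Convolution

lemma inv_sqrt_pow_eq_rpow {x : ℝ} (hx : 0 ≤ x) (n : ℕ) :
    (√x)⁻¹ ^ n = x ^ (-(n : ℝ) / 2) := by
  rw [sqrt_eq_rpow, ← rpow_neg hx, ← rpow_mul_natCast hx]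
  congr 1
  ring

section GaussianWeight

/-- The weight `|k|ⁿ e^{-ak²}` of a Gaussian multiplier in the `n`-th absolute moment. -/
def gaussianWeight (a : ℝ) (n : ℕ) (k : ℝ) : ℝ := |k| ^ n * exp (-a * k ^ 2)

variable {a : ℝ} {n : ℕ} {W : ℝ → ℂ}

lemma gaussianWeight_nonneg (a : ℝ) (n : ℕ) (k : ℝ) : 0 ≤ gaussianWeight a n k := by
  unfold gaussianWeight
  positivity

lemma continuous_gaussianWeight (a : ℝ) (n : ℕ) : Continuous (gaussianWeight a n) := by
  unfold gaussianWeight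
  fun_prop

lemma integrable_gaussianWeight (ha : 0 < a) (n : ℕ) : Integrable (gaussianWeight a n) := by
  have h := (integrable_rpow_mul_exp_neg_mul_sq ha (neg_one_lt_zero.trans_le n.cast_nonneg)).norm
  unfold gaussianWeight
  simpa using h

lemma integral_gaussianWeight (ha : 0 < a) (n : ℕ) :
    ∫ k, gaussianWeight a n k = (√a)⁻¹ ^ (n + 1) * Gamma ((n + 1) / 2) := by
  calc ∫ k, gaussianWeight a n k
      = ∫ k, (fun x : ℝ => x ^ (n : ℝ) * exp (-a * x ^ (2 : ℝ))) |k| := by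
        simp [gaussianWeight]
    _ = (√a)⁻¹ ^ (n + 1) * Gamma ((n + 1) / 2) := by
        rw [integral_comp_abs (f := fun x : ℝ => x ^ (n : ℝ) * exp (-a * x ^ (2 : ℝ))),
          integral_rpow_mul_exp_neg_mul_rpow two_pos
          (neg_one_lt_zero.trans_le n.cast_nonneg) ha, inv_sqrt_pow_eq_rpow ha.le]
        push_cast
        ring

lemma integral_gaussianWeight_le (ha : 0 < a) (hn : n ≤ 2) :
    ∫ k, gaussianWeight a n k ≤ 2 * (√a)⁻¹ ^ (n + 1) := by
  have hGamma : Gamma (((n : ℝ) + 1) / 2) ≤ 2 := by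
    interval_cases n
    · rw [Nat.cast_zero, zero_add, Gamma_one_half_eq]
      exact sqrt_le_iff.2 ⟨zero_le_two, by linarith [pi_le_four]⟩
    · norm_num
    · norm_num
      linarith [Gamma_three_div_two_lt_one]
  rw [integral_gaussianWeight ha, mul_comm]
  gcongr

lemma gaussianWeight_le (ha : 0 < a) (hn : n ≤ 2) (k : ℝ) :
    gaussianWeight a n k ≤ (√a)⁻¹ ^ n := by
  have hsq : (√a * |k|) ^ 2 = a * k ^ 2 := by rw [mul_pow, sq_sqrt ha.le, sq_abs]
  have hexp : (√a * |k|) ^ n ≤ exp (a * k ^ 2) :=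
    calc (√a * |k|) ^ n ≤ (√a * |k|) ^ 2 + 1 := by
          interval_cases n <;> nlinarith [sq_nonneg (√a * |k| - 1)]
      _ ≤ exp (a * k ^ 2) := hsq ▸ add_one_le_exp _
  calc gaussianWeight a n k = (√a)⁻¹ ^ n * ((√a * |k|) ^ n * exp (-a * k ^ 2)) := by
        have : √a ≠ 0 := (sqrt_pos.2 ha).ne'
        rw [gaussianWeight, ← mul_assoc, ← mul_pow, inv_mul_cancel_left₀ this]
    _ ≤ (√a)⁻¹ ^ n * (exp (a * k ^ 2) * exp (-a * k ^ 2)) := by gcongr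
    _ = (√a)⁻¹ ^ n := by rw [← exp_add]; simp

lemma integrable_gaussianWeight_mul_norm (ha : 0 < a) (hn : n ≤ 2) (hW : Integrable W) :
    Integrable fun k => gaussianWeight a n k * ‖W k‖ :=
  hW.norm.bdd_mul (continuous_gaussianWeight a n).aestronglyMeasurable <| .of_forall fun k => by
    simpa [abs_of_nonneg (gaussianWeight_nonneg a n k)] using gaussianWeight_le ha hn k

lemma integral_gaussianWeight_mul_norm_le (ha : 0 < a) (hn : n ≤ 2) (hW : Integrable W) :
    ∫ k, gaussianWeight a n k * ‖W k‖ ≤ (√a)⁻¹ ^ n * ∫ k, ‖W k‖ := by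
  rw [← integral_const_mul]
  refine integral_mono (integrable_gaussianWeight_mul_norm ha hn hW) (hW.norm.const_mul _)
    fun k => ?_
  dsimp only
  gcongr
  exact gaussianWeight_le ha hn k

lemma integral_gaussianWeight_mul_norm_le_of_norm_le (ha : 0 < a) (hn : n ≤ 2) {S : ℝ}
    (hS : ∀ᵐ k, ‖W k‖ ≤ S) :
    ∫ k, gaussianWeight a n k * ‖W k‖ ≤ 2 * (√a)⁻¹ ^ (n + 1) * S := by
  have hS0 : 0 ≤ S := by
    obtain ⟨k, hk⟩ := hS.exists
    exact (norm_nonneg _).trans hk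
  calc ∫ k, gaussianWeight a n k * ‖W k‖ ≤ ∫ k, gaussianWeight a n k * S := by
        refine integral_mono_of_nonneg
          (.of_forall fun k => mul_nonneg (gaussianWeight_nonneg a n k) (norm_nonneg _))
          ((integrable_gaussianWeight ha n).mul_const S) ?_
        filter_upwards [hS] with k hk
        exact mul_le_mul_of_nonneg_left hk (gaussianWeight_nonneg a n k)
    _ ≤ 2 * (√a)⁻¹ ^ (n + 1) * S := by
        rw [integral_mul_const]
        gcongr
        exact integral_gaussianWeight_le ha hn

end GaussianWeight

section Propagator

/-- The oscillatory heat propagator `e^{-k²d(t-s)+icks}` of the Duhamel formula. -/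
def propagator (d c t s k : ℝ) : ℂ := expc (-(k ^ 2 * d * (t - s))) (c * k * s)

/-- The product-rule derivative of `k ↦ propagator d c t s k * w k`, with `w'` in place of the
weak derivative of `w`. -/
def propagatorMulDeriv (d c t s : ℝ) (w w' : ℝ → ℂ) (k : ℝ) : ℂ :=
  deriv (propagator d c t s) k * w k + propagator d c t s k * w' k

variable {d c t s : ℝ}

lemma norm_propagator (d c t s k : ℝ) : ‖propagator d c t s k‖ = exp (-(d * (t - s)) * k ^ 2) := by
  rw [propagator, expc, Complex.norm_exp, Complex.add_re, Complex.ofReal_re, Complex.re_ofReal_mul,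
    Complex.I_re]
  ring_nf

lemma norm_propagator_le_one (hd : 0 ≤ d) (hst : s ≤ t) (c k : ℝ) :
    ‖propagator d c t s k‖ ≤ 1 := by
  rw [norm_propagator, exp_le_one_iff, neg_mul, neg_nonpos]
  have := sub_nonneg.2 hst
  positivity

lemma contDiff_propagator (d c t s : ℝ) : ContDiff ℝ (⊤ : ℕ∞) (propagator d c t s) := by
  unfold propagator expc
  have hre : ContDiff ℝ (⊤ : ℕ∞) fun k : ℝ => -(k ^ 2 * d * (t - s)) := by fun_prop
  have him : ContDiff ℝ (⊤ : ℕ∞) fun k : ℝ => c * k * s := by fun_prop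
  exact ((Complex.ofRealCLM.contDiff.comp hre).add
    ((Complex.ofRealCLM.contDiff.comp him).mul contDiff_const)).cexp

lemma deriv_propagator (d c t s k : ℝ) :
    deriv (propagator d c t s) k = propagator d c t s k *
      ((-(2 * (d * (t - s)) * k) : ℝ) + (c * s : ℝ) * Complex.I) := by
  have hre : HasDerivAt (fun k : ℝ => -(k ^ 2 * d * (t - s))) (-(2 * (d * (t - s)) * k)) k := by
    refine (((hasDerivAt_pow 2 k).mul_const d).mul_const (t - s)).neg.congr_deriv ?_
    norm_num
    ring
  have him : HasDerivAt (fun k : ℝ => c * k * s) (c * s) k := by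
    simpa using ((hasDerivAt_id k).const_mul c).mul_const s
  exact (hre.ofReal_comp.add (him.ofReal_comp.mul_const Complex.I)).cexp.deriv

lemma norm_deriv_propagator_le (hd : 0 ≤ d) (hst : s ≤ t) (c k : ℝ) :
    ‖deriv (propagator d c t s) k‖
      ≤ (2 * (d * (t - s)) * |k| + |c * s|) * exp (-(d * (t - s)) * k ^ 2) := by
  have ha : 0 ≤ d * (t - s) := mul_nonneg hd (sub_nonneg.2 hst)
  rw [deriv_propagator, norm_mul, norm_propagator, mul_comm]
  gcongr
  refine (norm_add_le _ _).trans_eq ?_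
  rw [norm_mul, Complex.norm_I, Complex.norm_real, Complex.norm_real, norm_eq_abs, norm_eq_abs,
    mul_one, abs_neg, abs_mul, abs_mul, abs_of_nonneg ha, abs_two]

section Measurability

variable {w w' : ℝ → ℝ → ℂ}

lemma measurable_uncurry_propagator (d c t : ℝ) :
    Measurable (Function.uncurry (propagator d c t)) := by
  unfold propagator expc
  fun_prop

lemma measurable_uncurry_propagator_mul (d c t : ℝ) (hw : Measurable (Function.uncurry w)) :
    Measurable (Function.uncurry fun s k => propagator d c t s k * w s k) :=
  (measurable_uncurry_propagator d c t).mul hw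

lemma measurable_uncurry_propagatorMulDeriv (d c t : ℝ) (hw : Measurable (Function.uncurry w))
    (hw' : Measurable (Function.uncurry w')) :
    Measurable (Function.uncurry fun s => propagatorMulDeriv d c t s (w s) (w' s)) := by
  have hder : Measurable (Function.uncurry fun s => deriv (propagator d c t s)) := by
    simp only [funext (deriv_propagator d c t _)]
    exact (measurable_uncurry_propagator d c t).mul (by fun_prop)
  exact (hder.mul hw).add (measurable_uncurry_propagator_mul d c t hw')

end Measurability

variable {w w' : ℝ → ℂ} {j : ℕ}

lemma abs_pow_mul_norm_propagatorMulDeriv_le (hd : 0 ≤ d) (hst : s ≤ t) (c : ℝ) (w w' : ℝ → ℂ)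
    (j : ℕ) (k : ℝ) :
    |k| ^ j * ‖propagatorMulDeriv d c t s w w' k‖
      ≤ 2 * (d * (t - s)) * (gaussianWeight (d * (t - s)) (j + 1) k * ‖w k‖)
        + |c * s| * (gaussianWeight (d * (t - s)) j k * ‖w k‖)
        + gaussianWeight (d * (t - s)) j k * ‖w' k‖ :=
  calc |k| ^ j * ‖propagatorMulDeriv d c t s w w' k‖
      ≤ |k| ^ j * ((2 * (d * (t - s)) * |k| + |c * s|) * exp (-(d * (t - s)) * k ^ 2) * ‖w k‖
        + exp (-(d * (t - s)) * k ^ 2) * ‖w' k‖) := by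
        gcongr
        refine norm_add_le_of_le ?_ ?_ <;> rw [norm_mul]
        · gcongr
          exact norm_deriv_propagator_le hd hst c k
        · rw [norm_propagator]
    _ = _ := by
        unfold gaussianWeight
        ring

lemma integrable_abs_pow_mul_propagatorMulDeriv (hd : 0 < d) (hst : s < t) (c : ℝ) (hj : j ≤ 1)
    (hw : Integrable w) (hw' : Integrable w') :
    Integrable fun k => ((|k| ^ j : ℝ) : ℂ) * propagatorMulDeriv d c t s w w' k := by
  have ha : 0 < d * (t - s) := mul_pos hd (sub_pos.2 hst)
  have hmeas : AEStronglyMeasurable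
      (fun k => ((|k| ^ j : ℝ) : ℂ) * propagatorMulDeriv d c t s w w' k) := by
    refine .fun_mul (by fun_prop) (.add (.mul ?_ hw.1) (.mul ?_ hw'.1))
    · exact ((contDiff_propagator d c t s).continuous_deriv (by simp)).aestronglyMeasurable
    · exact (contDiff_propagator d c t s).continuous.aestronglyMeasurable
  have i_heat := integrable_gaussianWeight_mul_norm ha (by omega : j + 1 ≤ 2) hw
  have i_osc := integrable_gaussianWeight_mul_norm ha (by omega : j ≤ 2) hw
  have i_der := integrable_gaussianWeight_mul_norm ha (by omega : j ≤ 2) hw'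
  refine (((i_heat.const_mul (2 * (d * (t - s)))).add (i_osc.const_mul |c * s|)).add i_der).mono'
    hmeas (.of_forall fun k => ?_)
  simpa using abs_pow_mul_norm_propagatorMulDeriv_le hd.le hst.le c w w' j k

lemma integral_abs_pow_mul_norm_propagatorMulDeriv_le {S : ℝ} (hd : 0 < d) (hst : s < t) (c : ℝ)
    (hj : j ≤ 1) (hw : Integrable w) (hw' : Integrable w') (hS : ∀ᵐ k, ‖w k‖ ≤ S) :
    ∫ k, |k| ^ j * ‖propagatorMulDeriv d c t s w w' k‖
      ≤ (√(d * (t - s)))⁻¹ ^ j * (4 * S + ∫ k, ‖w' k‖)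
        + |c * s| * min (2 * (√(d * (t - s)))⁻¹ ^ (j + 1) * S)
            ((√(d * (t - s)))⁻¹ ^ j * ∫ k, ‖w k‖) := by
  have ha : 0 < d * (t - s) := mul_pos hd (sub_pos.2 hst)
  have hpt := abs_pow_mul_norm_propagatorMulDeriv_le hd.le hst.le c w w' j
  set a := d * (t - s)
  have i_heat := (integrable_gaussianWeight_mul_norm ha (by omega : j + 1 ≤ 2) hw).const_mul (2 * a)
  have i_osc := (integrable_gaussianWeight_mul_norm ha (by omega : j ≤ 2) hw).const_mul |c * s|
  have i_der := integrable_gaussianWeight_mul_norm ha (by omega : j ≤ 2) hw'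
  calc ∫ k, |k| ^ j * ‖propagatorMulDeriv d c t s w w' k‖
      ≤ 2 * a * (∫ k, gaussianWeight a (j + 1) k * ‖w k‖)
        + |c * s| * (∫ k, gaussianWeight a j k * ‖w k‖)
        + ∫ k, gaussianWeight a j k * ‖w' k‖ := by
        rw [← integral_const_mul, ← integral_const_mul, ← integral_add i_heat i_osc,
          ← integral_add (i_heat.fun_add i_osc) i_der]
        exact integral_mono_of_nonneg (.of_forall fun k => by positivity)
          ((i_heat.add i_osc).add i_der) (.of_forall hpt)
    _ ≤ 2 * a * (2 * (√a)⁻¹ ^ (j + 1 + 1) * S)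
        + |c * s| * min (2 * (√a)⁻¹ ^ (j + 1) * S) ((√a)⁻¹ ^ j * ∫ k, ‖w k‖)
        + (√a)⁻¹ ^ j * ∫ k, ‖w' k‖ := by
        gcongr
        · exact integral_gaussianWeight_mul_norm_le_of_norm_le ha (by omega) hS
        · exact le_min (integral_gaussianWeight_mul_norm_le_of_norm_le ha (by omega) hS)
            (integral_gaussianWeight_mul_norm_le ha (by omega) hw)
        · exact integral_gaussianWeight_mul_norm_le ha (by omega) hw'
    _ = _ := by
        have hcancel : a * (√a)⁻¹ ^ 2 = 1 := by
          rw [inv_pow, sq_sqrt ha.le, mul_inv_cancel₀ ha.ne']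
        linear_combination 4 * (√a)⁻¹ ^ j * S * hcancel

end Propagator

section Decay

variable {s t : ℝ}

lemma sqrt_add_le_sqrt_add_sqrt {x y : ℝ} (hx : 0 ≤ x) (hy : 0 ≤ y) : √(x + y) ≤ √x + √y := by
  refine sqrt_le_iff.2 ⟨by positivity, ?_⟩
  rw [add_sq, sq_sqrt hx, sq_sqrt hy]
  have : 0 ≤ √x * √y := by positivity
  linarith

lemma intervalIntegrable_inv_sqrt (ht : 0 ≤ t) :
    IntervalIntegrable (fun s => (√s)⁻¹) volume 0 t := by
  refine (intervalIntegral.intervalIntegrable_rpow' (r := -1 / 2) (by norm_num)).congr ?_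
  intro s hs
  rw [Set.uIoc_of_le ht] at hs
  simpa using (inv_sqrt_pow_eq_rpow hs.1.le 1).symm

lemma integral_inv_sqrt (ht : 0 ≤ t) : ∫ s in 0..t, (√s)⁻¹ = 2 * √t :=
  calc ∫ s in 0..t, (√s)⁻¹ = ∫ s in 0..t, s ^ (-1 / 2 : ℝ) := by
        refine intervalIntegral.integral_congr fun s hs => ?_
        rw [Set.uIcc_of_le ht] at hs
        simpa using inv_sqrt_pow_eq_rpow hs.1 1
    _ = 2 * √t := by
        rw [integral_rpow (.inl (by norm_num)), sqrt_eq_rpow]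
        norm_num
        ring

lemma intervalIntegrable_inv_sqrt_one_add_pow (ht : 0 ≤ t) (n : ℕ) :
    IntervalIntegrable (fun s => (√(1 + s))⁻¹ ^ n) volume 0 t := by
  refine ContinuousOn.intervalIntegrable (.pow (.inv₀ (by fun_prop) fun s hs => ?_) n)
  rw [Set.uIcc_of_le ht] at hs
  exact (sqrt_pos.2 (by linarith [hs.1])).ne'

lemma integral_inv_sqrt_one_add_pow_three_le (ht : 0 ≤ t) :
    ∫ s in 0..t, (√(1 + s))⁻¹ ^ 3 ≤ 2 :=
  calc ∫ s in 0..t, (√(1 + s))⁻¹ ^ 3 = ∫ s in 0..t, (1 + s) ^ (-3 / 2 : ℝ) := by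
        refine intervalIntegral.integral_congr fun s hs => ?_
        rw [Set.uIcc_of_le ht] at hs
        simpa using inv_sqrt_pow_eq_rpow (add_nonneg zero_le_one hs.1) 3
    _ = 2 - 2 * (1 + t) ^ (-1 / 2 : ℝ) := by
        rw [intervalIntegral.integral_comp_add_left (fun x : ℝ => x ^ (-3 / 2 : ℝ)),
          integral_rpow (.inr ⟨by norm_num, ?_⟩)]
        · norm_num
          ring
        · rw [Set.uIcc_of_le (by linarith)]
          exact fun h => by linarith [h.1]
    _ ≤ 2 := by
        have : 0 ≤ (1 + t) ^ (-1 / 2 : ℝ) := by positivity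
        linarith

/-- A majorant of `s ↦ (1+s)^{-3/2} + (1+s)^{-1/2} (t-s)^{-1/2}` whose integral over `[0,t]` is
bounded uniformly in `t`. -/
def decayMajorant (t s : ℝ) : ℝ := (√(1 + s))⁻¹ ^ 3 + (√t)⁻¹ * ((√s)⁻¹ + (√(t - s))⁻¹)

lemma decay_le_decayMajorant (hs : 0 < s) (hst : s < t) :
    (√(1 + s))⁻¹ ^ 3 + (√(1 + s))⁻¹ * (√(t - s))⁻¹ ≤ decayMajorant t s := by
  have hts : 0 < t - s := sub_pos.2 hst
  have hsqrt : √t ≤ √s + √(t - s) := by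
    simpa using sqrt_add_le_sqrt_add_sqrt hs.le hts.le
  refine add_le_add le_rfl ?_
  calc (√(1 + s))⁻¹ * (√(t - s))⁻¹ ≤ (√s)⁻¹ * (√(t - s))⁻¹ := by gcongr; linarith
    _ = (√t)⁻¹ * (√t * ((√s)⁻¹ * (√(t - s))⁻¹)) := by
        rw [inv_mul_cancel_left₀ (sqrt_pos.2 (hs.trans hst)).ne']
    _ ≤ (√t)⁻¹ * ((√s + √(t - s)) * ((√s)⁻¹ * (√(t - s))⁻¹)) := by gcongr
    _ = (√t)⁻¹ * ((√s)⁻¹ + (√(t - s))⁻¹) := by field_simp; ring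

lemma intervalIntegrable_inv_sqrt_sub (ht : 0 ≤ t) :
    IntervalIntegrable (fun s => (√(t - s))⁻¹) volume 0 t := by
  simpa using ((intervalIntegrable_inv_sqrt ht).comp_sub_left t).symm

lemma intervalIntegrable_decayMajorant (ht : 0 ≤ t) :
    IntervalIntegrable (decayMajorant t) volume 0 t :=
  (intervalIntegrable_inv_sqrt_one_add_pow ht 3).add
    (((intervalIntegrable_inv_sqrt ht).add (intervalIntegrable_inv_sqrt_sub ht)).const_mul _)

lemma integrableOn_decayMajorant (ht : 0 ≤ t) : IntegrableOn (decayMajorant t) (Set.Ioo 0 t) :=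
  (intervalIntegrable_iff_integrableOn_Ioo_of_le ht).1 (intervalIntegrable_decayMajorant ht)

lemma integral_decayMajorant_le (ht : 0 ≤ t) : ∫ s in 0..t, decayMajorant t s ≤ 6 := by
  have i_sum := (intervalIntegrable_inv_sqrt ht).add (intervalIntegrable_inv_sqrt_sub ht)
  have integral_inv_sqrt_sub : ∫ s in 0..t, (√(t - s))⁻¹ = 2 * √t := by
    simp [intervalIntegral.integral_comp_sub_left fun s => (√s)⁻¹, integral_inv_sqrt ht]
  calc ∫ s in 0..t, decayMajorant t s
      = (∫ s in 0..t, (√(1 + s))⁻¹ ^ 3) + (√t)⁻¹ * (2 * √t + 2 * √t) := by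
        unfold decayMajorant
        rw [intervalIntegral.integral_add (intervalIntegrable_inv_sqrt_one_add_pow ht 3)
          (i_sum.const_mul _), intervalIntegral.integral_const_mul,
          intervalIntegral.integral_add (intervalIntegrable_inv_sqrt ht)
          (intervalIntegrable_inv_sqrt_sub ht), integral_inv_sqrt ht, integral_inv_sqrt_sub]
    _ = (∫ s in 0..t, (√(1 + s))⁻¹ ^ 3) + 4 * ((√t)⁻¹ * √t) := by ring
    _ ≤ 2 + 4 * 1 := by
        gcongr
        · exact integral_inv_sqrt_one_add_pow_three_le ht
        · exact inv_mul_le_one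
    _ = 6 := by norm_num

-- For `j = 1`, each of `u⁻¹` and `v⁻¹` is absorbed by the matching argument of the minimum.
lemma decay_rate_le {r u v : ℝ} {j : ℕ} (hr : 0 < r) (hu : 0 < u) (hu1 : u ≤ 1) (hv : 0 < v)
    (hruv : r ≤ u⁻¹ + v⁻¹) (hj : j ≤ 1) :
    u ^ 3 * v ^ j + min (u * v ^ (j + 1)) (u ^ 2 * v ^ j)
      ≤ 3 * (r⁻¹ ^ j * (u ^ 3 + u * v)) := by
  obtain rfl | rfl : j = 0 ∨ j = 1 := by omega
  · have hmin := min_le_left (u * v) (u ^ 2)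
    have : 0 ≤ u ^ 3 + u * v := by positivity
    simp only [pow_zero, mul_one, one_mul, zero_add, pow_one]
    linarith
  · set m := min (u * v ^ 2) (u ^ 2 * v)
    have hm : 0 ≤ m := by positivity
    have hum : u⁻¹ * m ≤ u * v :=
      calc u⁻¹ * m ≤ u⁻¹ * (u ^ 2 * v) := by gcongr; exact min_le_right _ _
        _ = u * v := by field_simp
    have hvm : v⁻¹ * m ≤ u * v :=
      calc v⁻¹ * m ≤ v⁻¹ * (u * v ^ 2) := by gcongr; exact min_le_left _ _
        _ = u * v := by field_simp
    have huv : u ^ 2 * v ≤ u * v := by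
      gcongr
      exact pow_le_of_le_one hu.le hu1 two_ne_zero
    suffices r * (u ^ 3 * v + m) ≤ 3 * (u ^ 3 + u * v) by
      rw [pow_one, pow_one, mul_left_comm]
      exact (le_inv_mul_iff₀ hr).2 this
    calc r * (u ^ 3 * v + m) ≤ (u⁻¹ + v⁻¹) * (u ^ 3 * v + m) := by gcongr
      _ = u ^ 2 * v + u ^ 3 + (u⁻¹ * m + v⁻¹ * m) := by field_simp
      _ ≤ u * v + 3 * u ^ 3 + (u * v + u * v) := by
          have : 0 ≤ u ^ 3 := by positivity
          gcongr
          linarith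
      _ = 3 * (u ^ 3 + u * v) := by ring

end Decay

section Duhamel

/-- `w` has the size of a fourth convolution power at time `s` of a function decaying like
`(1+s)^{-1/2}` in `L¹`, and `w'` is its weak derivative. -/
structure HasSourceDecay (ε s : ℝ) (w w' : ℝ → ℂ) : Prop where
  integrable : Integrable w
  integrable_deriv : Integrable w'
  hasWeakDeriv : HasWeakDeriv w w'
  norm_le : ∀ᵐ k, ‖w k‖ ≤ ε * (√(1 + s))⁻¹ ^ 3
  integral_norm_le : ∫ k, ‖w k‖ ≤ ε * (√(1 + s))⁻¹ ^ 4
  integral_norm_deriv_le : ∫ k, ‖w' k‖ ≤ ε * (√(1 + s))⁻¹ ^ 3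

/-- The constant in the estimate of `propagatorMulDeriv` at a fixed time; its dependence on `d`
comes from the powers `(√d)⁻¹ ^ n`, `n ≤ 2`, of the Gaussian moments. -/
def duhamelConst (d c : ℝ) : ℝ := (5 + 2 * |c|) * (1 + (√d)⁻¹) ^ 2

lemma one_le_duhamelConst (d c : ℝ) : 1 ≤ duhamelConst d c :=
  one_le_mul_of_one_le_of_one_le (by linarith [abs_nonneg c])
    (one_le_pow₀ (le_add_of_nonneg_right (by positivity)))

lemma inv_sqrt_one_add_le_one {s : ℝ} (hs : 0 ≤ s) : (√(1 + s))⁻¹ ≤ 1 :=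
  inv_le_one_of_one_le₀ (one_le_sqrt.2 (le_add_of_nonneg_right hs))

lemma mul_inv_sqrt_one_add_sq_le_one {s : ℝ} (hs : 0 ≤ s) : s * (√(1 + s))⁻¹ ^ 2 ≤ 1 := by
  rw [inv_pow, sq_sqrt (by positivity), ← div_eq_mul_inv, div_le_one (by positivity)]
  linarith

variable {d t ε : ℝ} {j : ℕ}

lemma pow_le_one_add_sq {r : ℝ} (hr : 0 ≤ r) {n : ℕ} (hn : n ≤ 2) : r ^ n ≤ (1 + r) ^ 2 :=
  (pow_le_pow_left₀ hr (le_add_of_nonneg_left zero_le_one) n).trans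
    (pow_le_pow_right₀ (le_add_of_nonneg_right hr) hn)

lemma mul_min_decay_le {r s u v : ℝ} (hr : 0 ≤ r) (hs : 0 ≤ s) (hu : 0 ≤ u) (hv : 0 ≤ v)
    (hε : 0 ≤ ε) (hsu : s * u ^ 2 ≤ 1) (hj : j ≤ 1) :
    s * min (2 * (r * v) ^ (j + 1) * (ε * u ^ 3)) ((r * v) ^ j * (ε * u ^ 4))
      ≤ 2 * (1 + r) ^ 2 * ε * min (u * v ^ (j + 1)) (u ^ 2 * v ^ j) := by
  rw [mul_min_of_nonneg _ _ hs, mul_min_of_nonneg _ _ (by positivity)]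
  refine min_le_min ?_ ?_
  · calc s * (2 * (r * v) ^ (j + 1) * (ε * u ^ 3))
        = 2 * r ^ (j + 1) * ε * (s * u ^ 2 * (u * v ^ (j + 1))) := by ring
      _ ≤ 2 * (1 + r) ^ 2 * ε * (1 * (u * v ^ (j + 1))) := by
          gcongr
          exact pow_le_one_add_sq hr (by omega)
      _ = 2 * (1 + r) ^ 2 * ε * (u * v ^ (j + 1)) := by ring
  · calc s * ((r * v) ^ j * (ε * u ^ 4))
        = 1 * r ^ j * ε * (s * u ^ 2 * (u ^ 2 * v ^ j)) := by ring
      _ ≤ 2 * (1 + r) ^ 2 * ε * (1 * (u ^ 2 * v ^ j)) := by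
          gcongr
          · exact one_le_two
          · exact pow_le_one_add_sq hr (by omega)
      _ = 2 * (1 + r) ^ 2 * ε * (u ^ 2 * v ^ j) := by ring

lemma HasSourceDecay.integral_norm_propagatorMulDeriv_le {s : ℝ} {w w' : ℝ → ℂ}
    (h : HasSourceDecay ε s w w') (hd : 0 < d) (hs : 0 ≤ s) (hst : s < t) (hε : 0 ≤ ε) (c : ℝ)
    (hj : j ≤ 1) :
    ∫ k, |k| ^ j * ‖propagatorMulDeriv d c t s w w' k‖
      ≤ duhamelConst d c * ε * ((√(1 + s))⁻¹ ^ 3 * (√(t - s))⁻¹ ^ j +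
          min ((√(1 + s))⁻¹ * (√(t - s))⁻¹ ^ (j + 1)) ((√(1 + s))⁻¹ ^ 2 * (√(t - s))⁻¹ ^ j)) := by
  have hscale : (√(d * (t - s)))⁻¹ = (√d)⁻¹ * (√(t - s))⁻¹ := by rw [sqrt_mul hd.le, mul_inv]
  have bound := integral_abs_pow_mul_norm_propagatorMulDeriv_le hd hst c hj h.integrable
    h.integrable_deriv h.norm_le
  have hsu := mul_inv_sqrt_one_add_sq_le_one hs
  have hL1 := h.integral_norm_le
  have hder := h.integral_norm_deriv_le
  rw [hscale, abs_mul, abs_of_nonneg hs] at bound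
  unfold duhamelConst
  set u := (√(1 + s))⁻¹
  set v := (√(t - s))⁻¹
  set r := (√d)⁻¹
  set m := min (u * v ^ (j + 1)) (u ^ 2 * v ^ j)
  have hr : 0 ≤ r := by positivity
  calc ∫ k, |k| ^ j * ‖propagatorMulDeriv d c t s w w' k‖
      ≤ (r * v) ^ j * (4 * (ε * u ^ 3) + ε * u ^ 3)
        + |c| * s * min (2 * (r * v) ^ (j + 1) * (ε * u ^ 3)) ((r * v) ^ j * (ε * u ^ 4)) :=
        bound.trans (by gcongr)
    _ = 5 * r ^ j * ε * (u ^ 3 * v ^ j)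
        + |c| * (s * min (2 * (r * v) ^ (j + 1) * (ε * u ^ 3)) ((r * v) ^ j * (ε * u ^ 4))) := by
        ring
    _ ≤ 5 * (1 + r) ^ 2 * ε * (u ^ 3 * v ^ j) + |c| * (2 * (1 + r) ^ 2 * ε * m) := by
        gcongr 5 * ?_ * ε * (u ^ 3 * v ^ j) + |c| * ?_
        · exact pow_le_one_add_sq hr (by omega)
        · exact mul_min_decay_le hr hs (by positivity) (by positivity) hε hsu hj
    _ ≤ 5 * (1 + r) ^ 2 * ε * (u ^ 3 * v ^ j) + |c| * (2 * (1 + r) ^ 2 * ε * m)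
        + (2 * |c| * (1 + r) ^ 2 * ε * (u ^ 3 * v ^ j) + 5 * (1 + r) ^ 2 * ε * m) :=
        le_add_of_nonneg_right (by positivity)
    _ = (5 + 2 * |c|) * (1 + r) ^ 2 * ε * (u ^ 3 * v ^ j + m) := by ring

lemma HasSourceDecay.integral_norm_propagatorMulDeriv_le_decayMajorant {s : ℝ}
    {w w' : ℝ → ℂ} (h : HasSourceDecay ε s w w') (hd : 0 < d) (hs : 0 < s) (hst : s < t)
    (hε : 0 ≤ ε) (c : ℝ) (hj : j ≤ 1) :
    ∫ k, |k| ^ j * ‖propagatorMulDeriv d c t s w w' k‖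
      ≤ 3 * duhamelConst d c * ε * (√(1 + t))⁻¹ ^ j * decayMajorant t s := by
  have hts : 0 < t - s := sub_pos.2 hst
  have hC : 0 ≤ duhamelConst d c := zero_le_one.trans (one_le_duhamelConst d c)
  have hsqrt : √(1 + t) ≤ ((√(1 + s))⁻¹)⁻¹ + ((√(t - s))⁻¹)⁻¹ := by
    have := sqrt_add_le_sqrt_add_sqrt (add_nonneg zero_le_one hs.le) hts.le
    rwa [add_add_sub_cancel, ← inv_inv √(1 + s), ← inv_inv √(t - s)] at this
  calc ∫ k, |k| ^ j * ‖propagatorMulDeriv d c t s w w' k‖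
      ≤ duhamelConst d c * ε * (3 * ((√(1 + t))⁻¹ ^ j *
          ((√(1 + s))⁻¹ ^ 3 + (√(1 + s))⁻¹ * (√(t - s))⁻¹))) := by
        refine (h.integral_norm_propagatorMulDeriv_le hd hs.le hst hε c hj).trans ?_
        gcongr
        exact decay_rate_le (sqrt_pos.2 (by linarith)) (by positivity)
          (inv_sqrt_one_add_le_one hs.le) (by positivity) hsqrt hj
    _ ≤ duhamelConst d c * ε * (3 * ((√(1 + t))⁻¹ ^ j * decayMajorant t s)) := by
        gcongr
        exact decay_le_decayMajorant hs hst
    _ = _ := by ring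

/-- The oscillatory Duhamel term with source `w`. -/
def duhamel (d c t : ℝ) (w : ℝ → ℝ → ℂ) (k : ℝ) : ℂ :=
  ∫ s in 0..t, propagator d c t s k * w s k

/-- The derivative of `duhamel d c t w` under the integral sign, where `w' s` stands for the weak
derivative of `w s`. -/
def duhamelDeriv (d c t : ℝ) (w w' : ℝ → ℝ → ℂ) (k : ℝ) : ℂ :=
  ∫ s in 0..t, propagatorMulDeriv d c t s (w s) (w' s) k

variable {w w' : ℝ → ℝ → ℂ}

lemma integrable_uncurry_propagator_mul (hd : 0 ≤ d) (hε : 0 ≤ ε) (c : ℝ)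
    (hw : Measurable (Function.uncurry w))
    (h : ∀ s ∈ Set.Ioo 0 t, HasSourceDecay ε s (w s) (w' s)) :
    Integrable (Function.uncurry fun s k => propagator d c t s k * w s k)
      ((volume.restrict (Set.Ioo 0 t)).prod volume) := by
  have norm_le {s : ℝ} (hst : s < t) (k : ℝ) : ‖propagator d c t s k * w s k‖ ≤ ‖w s k‖ := by
    rw [norm_mul]
    exact mul_le_of_le_one_left (norm_nonneg _) (norm_propagator_le_one hd hst.le c k)
  have integrable {s : ℝ} (hs : s ∈ Set.Ioo 0 t) :
      Integrable fun k => propagator d c t s k * w s k :=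
    (h s hs).integrable.mono ((contDiff_propagator d c t s).continuous.aestronglyMeasurable.mul
      (h s hs).integrable.1) (.of_forall (norm_le hs.2))
  refine integrable_uncurry_of_integral_norm_le
    (measurable_uncurry_propagator_mul d c t hw).aestronglyMeasurable (integrable_const ε)
    (ae_restrict_of_forall_mem measurableSet_Ioo fun s hs => integrable hs)
    (ae_restrict_of_forall_mem measurableSet_Ioo fun s hs => ?_)
  calc ∫ k, ‖propagator d c t s k * w s k‖ ≤ ∫ k, ‖w s k‖ :=
        integral_mono (integrable hs).norm (h s hs).integrable.norm (norm_le hs.2)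
    _ ≤ ε * (√(1 + s))⁻¹ ^ 4 := (h s hs).integral_norm_le
    _ ≤ ε := mul_le_of_le_one_right hε
        (pow_le_one₀ (by positivity) (inv_sqrt_one_add_le_one hs.1.le))

lemma integral_norm_abs_pow_mul_propagatorMulDeriv_le (hd : 0 < d) (hε : 0 ≤ ε) (c : ℝ)
    (hj : j ≤ 1) (h : ∀ s ∈ Set.Ioo 0 t, HasSourceDecay ε s (w s) (w' s)) :
    ∀ᵐ s ∂volume.restrict (Set.Ioo 0 t),
      ∫ k, ‖((|k| ^ j : ℝ) : ℂ) * propagatorMulDeriv d c t s (w s) (w' s) k‖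
        ≤ 3 * duhamelConst d c * ε * (√(1 + t))⁻¹ ^ j * decayMajorant t s := by
  refine ae_restrict_of_forall_mem measurableSet_Ioo fun s hs => ?_
  simpa using (h s hs).integral_norm_propagatorMulDeriv_le_decayMajorant
    hd hs.1 hs.2 hε c hj

lemma integrable_uncurry_abs_pow_mul_propagatorMulDeriv (hd : 0 < d) (ht : 0 ≤ t) (hε : 0 ≤ ε)
    (c : ℝ) (hj : j ≤ 1) (hw : Measurable (Function.uncurry w))
    (hw' : Measurable (Function.uncurry w'))
    (h : ∀ s ∈ Set.Ioo 0 t, HasSourceDecay ε s (w s) (w' s)) :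
    Integrable (Function.uncurry fun s k =>
        ((|k| ^ j : ℝ) : ℂ) * propagatorMulDeriv d c t s (w s) (w' s) k)
      ((volume.restrict (Set.Ioo 0 t)).prod volume) := by
  have weight_measurable : Measurable (Function.uncurry fun _ k : ℝ => ((|k| ^ j : ℝ) : ℂ)) := by
    fun_prop
  exact integrable_uncurry_of_integral_norm_le
    (weight_measurable.mul
      (measurable_uncurry_propagatorMulDeriv d c t hw hw')).aestronglyMeasurable
    ((integrableOn_decayMajorant ht).const_mul _)
    (ae_restrict_of_forall_mem measurableSet_Ioo fun s hs =>
      integrable_abs_pow_mul_propagatorMulDeriv hd hs.2 c hj (h s hs).integrable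
        (h s hs).integrable_deriv)
    (integral_norm_abs_pow_mul_propagatorMulDeriv_le hd hε c hj h)

lemma hasWeakDeriv_duhamel (hd : 0 < d) (ht : 0 ≤ t) (hε : 0 ≤ ε) (c : ℝ)
    (hw : Measurable (Function.uncurry w)) (hw' : Measurable (Function.uncurry w'))
    (h : ∀ s ∈ Set.Ioo 0 t, HasSourceDecay ε s (w s) (w' s)) :
    HasWeakDeriv (duhamel d c t w) (duhamelDeriv d c t w w') := by
  have hint := integrable_uncurry_abs_pow_mul_propagatorMulDeriv hd ht hε c zero_le_one hw hw' h
  unfold duhamel duhamelDeriv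
  simp only [pow_zero, Complex.ofReal_one, one_mul] at hint
  simp only [intervalIntegral.integral_of_le ht, integral_Ioc_eq_integral_Ioo]
  exact .integral (integrable_uncurry_propagator_mul hd.le hε c hw h) hint
    (ae_restrict_of_forall_mem measurableSet_Ioo fun s hs =>
      (h s hs).hasWeakDeriv.mul_left (contDiff_propagator d c t s))

lemma abs_pow_mul_norm_duhamelDeriv (ht : 0 ≤ t) (c : ℝ) (w w' : ℝ → ℝ → ℂ) (j : ℕ) (k : ℝ) :
    |k| ^ j * ‖duhamelDeriv d c t w w' k‖
      = ‖∫ s in Set.Ioo 0 t, ((|k| ^ j : ℝ) : ℂ) * propagatorMulDeriv d c t s (w s) (w' s) k‖ := by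
  simp [duhamelDeriv, intervalIntegral.integral_of_le ht, integral_Ioc_eq_integral_Ioo,
    integral_const_mul]

lemma integrable_abs_pow_mul_norm_duhamelDeriv (hd : 0 < d) (ht : 0 ≤ t) (hε : 0 ≤ ε) (c : ℝ)
    (hj : j ≤ 1) (hw : Measurable (Function.uncurry w)) (hw' : Measurable (Function.uncurry w'))
    (h : ∀ s ∈ Set.Ioo 0 t, HasSourceDecay ε s (w s) (w' s)) :
    Integrable fun k => |k| ^ j * ‖duhamelDeriv d c t w w' k‖ := by
  simp only [abs_pow_mul_norm_duhamelDeriv ht]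
  exact (integrable_uncurry_abs_pow_mul_propagatorMulDeriv hd ht hε c hj hw hw'
    h).integral_prod_right.norm

lemma integral_abs_pow_mul_norm_duhamelDeriv_le (hd : 0 < d) (ht : 0 ≤ t) (hε : 0 ≤ ε) (c : ℝ)
    (hj : j ≤ 1) (hw : Measurable (Function.uncurry w)) (hw' : Measurable (Function.uncurry w'))
    (h : ∀ s ∈ Set.Ioo 0 t, HasSourceDecay ε s (w s) (w' s)) :
    ∫ k, |k| ^ j * ‖duhamelDeriv d c t w w' k‖
      ≤ 18 * duhamelConst d c * ε * (√(1 + t))⁻¹ ^ j := by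
  have hint := integrable_uncurry_abs_pow_mul_propagatorMulDeriv hd ht hε c hj hw hw' h
  have hC : 0 ≤ duhamelConst d c := zero_le_one.trans (one_le_duhamelConst d c)
  have integral_majorant : ∫ s in Set.Ioo 0 t, decayMajorant t s ≤ 6 := by
    rw [← integral_Ioc_eq_integral_Ioo, ← intervalIntegral.integral_of_le ht]
    exact integral_decayMajorant_le ht
  simp only [abs_pow_mul_norm_duhamelDeriv ht]
  set A := 3 * duhamelConst d c * ε * (√(1 + t))⁻¹ ^ j with hA
  calc ∫ k, ‖∫ s in Set.Ioo 0 t, ((|k| ^ j : ℝ) : ℂ) * propagatorMulDeriv d c t s (w s) (w' s) k‖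
      ≤ ∫ s in Set.Ioo 0 t, ∫ k,
          ‖((|k| ^ j : ℝ) : ℂ) * propagatorMulDeriv d c t s (w s) (w' s) k‖ :=
        integral_norm_integral_le hint
    _ ≤ ∫ s in Set.Ioo 0 t, A * decayMajorant t s :=
        integral_mono_ae hint.norm.integral_prod_left
          ((integrableOn_decayMajorant ht).const_mul A)
          (integral_norm_abs_pow_mul_propagatorMulDeriv_le hd hε c hj h)
    _ ≤ A * 6 := by
        rw [integral_const_mul]
        gcongr
    _ = 18 * duhamelConst d c * ε * (√(1 + t))⁻¹ ^ j := by
        rw [hA]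
        ring

end Duhamel

lemma hasSourceDecay_convIter {δ s : ℝ} {f f' : ℝ → ℂ} (hs : 0 ≤ s) (hf : Integrable f)
    (hf' : Integrable f') (h : HasWeakDeriv f f') (hL1 : ∫ k, ‖f k‖ ≤ δ * (√(1 + s))⁻¹)
    (hsup : ∀ᵐ k, ‖f k‖ ≤ δ) (hderiv : ∫ k, ‖f' k‖ ≤ δ) (n : ℕ) :
    HasSourceDecay (δ ^ (n + 4)) s (convIter f (n + 3)) (conv (convIter f (n + 2)) f') := by
  have hδ : 0 ≤ δ := (integral_nonneg fun k => norm_nonneg (f' k)).trans hderiv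
  have hu1 : (√(1 + s))⁻¹ ≤ 1 := inv_sqrt_one_add_le_one hs
  have norm_power (m : ℕ) : ∫ k, ‖convIter f m k‖ ≤ (δ * (√(1 + s))⁻¹) ^ (m + 1) :=
    (integral_norm_convIter_le hf m).trans (by gcongr)
  have hpow := integrable_convIter hf (n + 2)
  set u := (√(1 + s))⁻¹
  have decay (m : ℕ) : u ^ (n + m) ≤ u ^ m :=
    pow_le_pow_of_le_one (by positivity) hu1 (Nat.le_add_left m n)
  have power_mul_le : (δ * u) ^ (n + 3) * δ ≤ δ ^ (n + 4) * u ^ 3 :=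
    calc (δ * u) ^ (n + 3) * δ = δ ^ (n + 4) * u ^ (n + 3) := by ring
      _ ≤ δ ^ (n + 4) * u ^ 3 := mul_le_mul_of_nonneg_left (decay 3) (by positivity)
  refine ⟨integrable_convIter hf (n + 3), integrable_conv hpow hf', h.conv_right hpow hf hf',
    .of_forall fun k => ?_, ?_, ?_⟩
  · exact (norm_conv_le hpow hsup k).trans
      ((mul_le_mul_of_nonneg_right (norm_power _) hδ).trans power_mul_le)
  · calc ∫ k, ‖convIter f (n + 3) k‖ ≤ δ ^ (n + 4) * u ^ (n + 4) :=
          (norm_power _).trans_eq (mul_pow _ _ _)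
      _ ≤ δ ^ (n + 4) * u ^ 4 := mul_le_mul_of_nonneg_left (decay 4) (by positivity)
  · calc ∫ k, ‖conv (convIter f (n + 2)) f' k‖ ≤ (∫ k, ‖convIter f (n + 2) k‖) * ∫ k, ‖f' k‖ :=
          integral_norm_conv_le hpow hf'
      _ ≤ (δ * u) ^ (n + 3) * δ := by gcongr; exact norm_power _
      _ ≤ δ ^ (n + 4) * u ^ 3 := power_mul_le

theorem irrelevant_convolution_power_derivative_estimate_general (d c : ℝ) (hd : 0 < d) :
    ∃ C : ℝ, 1 ≤ C ∧
      ∀ q : ℕ, 4 ≤ q → ∀ t : ℝ, 0 ≤ t → ∀ δ : ℝ, ∀ z z' : ℝ → ℝ → ℂ,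
        Measurable (Function.uncurry z) → Measurable (Function.uncurry z') →
        (∀ s ∈ Set.Icc (0 : ℝ) t,
          Integrable (z s) ∧ Integrable (z' s) ∧ HasWeakDeriv (z s) (z' s) ∧
          (∫ k : ℝ, ‖z s k‖) ≤ δ * (1 + s) ^ (-(1 : ℝ) / 2) ∧
          (∀ᵐ k : ℝ, ‖z s k‖ ≤ δ) ∧
          (∫ k : ℝ, ‖z' s k‖) ≤ δ) →
        ∃ G' : ℝ → ℂ,
          HasWeakDeriv
            (fun k => ∫ s in (0 : ℝ)..t,
              expc (-(k ^ 2 * d * (t - s))) (c * k * s) * convIter (z s) (q - 1) k) G' ∧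
          ∀ j : ℕ, j ≤ 1 → Integrable (fun k => |k| ^ j * ‖G' k‖) ∧
            (∫ k : ℝ, |k| ^ j * ‖G' k‖) ≤ C * δ ^ q * (1 + t) ^ (-(j : ℝ) / 2) := by
  refine ⟨18 * duhamelConst d c, by linarith [one_le_duhamelConst d c], ?_⟩
  intro q hq t ht δ z z' hz hz' h
  obtain ⟨n, rfl⟩ := Nat.exists_eq_add_of_le' hq
  have hδ : 0 ≤ δ := by
    obtain ⟨-, -, -, -, -, hderiv⟩ := h 0 ⟨le_rfl, ht⟩
    exact (integral_nonneg fun k => norm_nonneg (z' 0 k)).trans hderiv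
  have source (s : ℝ) (hs : s ∈ Set.Ioo 0 t) : HasSourceDecay (δ ^ (n + 4)) s
      (convIter (z s) (n + 3)) (conv (convIter (z s) (n + 2)) (z' s)) := by
    obtain ⟨hint, hint', hweak, hL1, hsup, hderiv⟩ := h s (Set.Ioo_subset_Icc_self hs)
    have hu := inv_sqrt_pow_eq_rpow (add_nonneg zero_le_one hs.1.le) 1
    rw [pow_one, Nat.cast_one] at hu
    exact hasSourceDecay_convIter hs.1.le hint hint' hweak (hu ▸ hL1) hsup hderiv n
  have hw := measurable_uncurry_convIter_s13 hz (n + 3)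
  have hw' := measurable_uncurry_conv (measurable_uncurry_convIter_s13 hz (n + 2)) hz'
  refine ⟨_, hasWeakDeriv_duhamel hd ht (by positivity) c hw hw' source, fun j hj =>
    ⟨integrable_abs_pow_mul_norm_duhamelDeriv hd ht (by positivity) c hj hw hw' source, ?_⟩⟩
  rw [← inv_sqrt_pow_eq_rpow (by positivity)]
  exact integral_abs_pow_mul_norm_duhamelDeriv_le hd ht (by positivity) c hj hw hw' source

/-- the weak `k`-derivative of the irrelevant oscillatory Duhamel term exists
and satisfies, for `q ≥ 4` and `j ∈ {0,1}`,
`∫ |k^j ∂_k (∫_0^t e^{-k²d(t-s)+icks} z^{*q}(k,s) ds)| dk ≤ C δ² (1+t)^{-j/2}`. -/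
theorem irrelevant_convolution_power_derivative_estimate
    (d c : ℝ) (hd : 0 < d) (q : ℕ) (hq : 4 ≤ q) :
    ∃ C : ℝ, 1 ≤ C ∧
      ∀ t : ℝ, 0 ≤ t → ∀ δ : ℝ, 0 < δ → δ ≤ 1 →
        ∀ z z' : ℝ → ℝ → ℂ,
          Measurable (Function.uncurry z) → Measurable (Function.uncurry z') →
          (∀ s ∈ Set.Icc (0 : ℝ) t,
            Integrable (z s) ∧ Integrable (z' s) ∧ HasWeakDeriv (z s) (z' s) ∧
            (∫ k : ℝ, ‖z s k‖) ≤ δ * (1 + s) ^ (-(1 : ℝ) / 2) ∧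
            (∀ᵐ k : ℝ, ‖z s k‖ ≤ δ) ∧
            (∫ k : ℝ, ‖z' s k‖) ≤ δ) →
          ∃ G' : ℝ → ℂ,
            HasWeakDeriv
              (fun k => ∫ s in (0 : ℝ)..t,
                expc (-(k ^ 2 * d * (t - s))) (c * k * s) * convIter (z s) (q - 1) k) G' ∧
            ∀ j : ℕ, j ≤ 1 →
              (∫ k : ℝ, |k| ^ j * ‖G' k‖) ≤ C * δ ^ 2 * (1 + t) ^ (-(j : ℝ) / 2) := by
  obtain ⟨C, hC, h⟩ := irrelevant_convolution_power_derivative_estimate_general d c hd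
  refine ⟨C, hC, fun t ht δ hδ hδ1 z z' hz hz' hslice => ?_⟩
  obtain ⟨G', hG', hbound⟩ := h q hq t ht δ z z' hz hz' hslice
  refine ⟨G', hG', fun j hj => (hbound j hj).2.trans ?_⟩
  have hpow : δ ^ q ≤ δ ^ 2 := pow_le_pow_of_le_one hδ.le hδ1 (by omega)
  gcongr
end
end
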